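/- arXiv:2003.01647 — 4 statements merged into one kernel-verified Lean document; each statement's English description precedes it below -/
import Mathlib

section
/- For n ≤ 3, any two n × n × n alternating sign hypermatrices A and B with L(A) = L(B) must be equal. -/
open Finset

/-- The nonzero entries of the sequence `f`, in order. -/
def nonzeroList {n : ℕ} (f : Fin n → ℤ) : List ℤ :=
  ((List.finRange n).map f).filter (· != 0)

/-- The nonzero entries of `f` alternate in sign, beginning and ending with `+1`. -/
def AltLine {n : ℕ} (f : Fin n → ℤ) : Prop :=
  nonzeroList f ≠ [] ∧
  (∀ i : ℕ, ∀ h : i < (nonzeroList f).length,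
      (nonzeroList f).get ⟨i, h⟩ = (-1 : ℤ) ^ i) ∧
  (nonzeroList f).getLast? = some 1

/-- Alternating sign matrix. -/
def IsASM {n : ℕ} (M : Fin n → Fin n → ℤ) : Prop :=
  (∀ i, AltLine (fun j => M i j)) ∧ (∀ j, AltLine (fun i => M i j))

/-- Alternating sign hypermatrix. -/
def IsASHM {n : ℕ} (A : Fin n → Fin n → Fin n → ℤ) : Prop :=
  (∀ j k, AltLine (fun i => A i j k)) ∧
  (∀ i k, AltLine (fun j => A i j k)) ∧
  (∀ i j, AltLine (fun k => A i j k))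

/-- The ASHL of an ASHM: `L(A)_{ij} = ∑ k·a_{ijk}` (planes indexed `1,…,n`). -/
def ashl {n : ℕ} (A : Fin n → Fin n → Fin n → ℤ) (i j : Fin n) : ℤ :=
  ∑ k : Fin n, ((k : ℕ) + 1 : ℤ) * A i j k

def tsign {n : ℕ} (a b x : Fin n) : ℤ :=
  if x = a then 1 else if x = b then -1 else 0

/-- The T-block `T_{i₁,j₁,k₁ : i₂,j₂,k₂}`. -/
def Tblock {n : ℕ} (i₁ i₂ j₁ j₂ k₁ k₂ : Fin n) (i j k : Fin n) : ℤ :=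
  tsign i₁ i₂ i * tsign j₁ j₂ j * tsign k₁ k₂ k


theorem altLine_one {f : Fin 1 → ℤ} (h : AltLine f) : f 0 = 1 := by
  obtain ⟨h1, h2, h3⟩ := h
  have e : nonzeroList f = [f 0].filter (· != 0) := by
    simp [nonzeroList, List.finRange_succ]
  rw [e] at h3
  by_cases a : f 0 = 0 <;> simp_all

theorem altLine_two {f : Fin 2 → ℤ} (h : AltLine f) : f 0 + f 1 = 1 := by
  obtain ⟨h1, h2, h3⟩ := h
  have e : nonzeroList f = [f 0, f 1].filter (· != 0) := by
    simp [nonzeroList, List.finRange_succ]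
  rw [e] at h2 h3
  have p0 := h2 0
  have p1 := h2 1
  clear h2 h1 e
  by_cases a : f 0 = 0 <;> by_cases b : f 1 = 0 <;> simp [a, b] at p0 p1 h3 ⊢ <;> omega

theorem altLine_three {f : Fin 3 → ℤ} (h : AltLine f) :
    f 0 + f 1 + f 2 = 1 ∧ 0 ≤ f 0 ∧ 0 ≤ f 2 ∧ f 0 ≤ 1 ∧ f 2 ≤ 1 := by
  obtain ⟨h1, h2, h3⟩ := h
  have e : nonzeroList f = [f 0, f 1, f 2].filter (· != 0) := by
    simp [nonzeroList, List.finRange_succ]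
  rw [e] at h2 h3
  have p0 := h2 0
  have p1 := h2 1
  have p2 := h2 2
  clear h2 h1 e
  by_cases a : f 0 = 0 <;> by_cases b : f 1 = 0 <;> by_cases c : f 2 = 0 <;>
    simp [a, b, c] at p0 p1 p2 h3 ⊢ <;> omega

theorem ashl_injective_of_small {n : ℕ} (hn : n ≤ 3)
    (A B : Fin n → Fin n → Fin n → ℤ) (hA : IsASHM A) (hB : IsASHM B)
    (h : ashl A = ashl B) : A = B := by
  have hL := fun i j => congrFun (congrFun h i) j
  obtain ⟨a1, a2, a3⟩ := hA
  obtain ⟨b1, b2, b3⟩ := hB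
  interval_cases n
  · funext i
    exact i.elim0
  · funext i j k
    have := altLine_one (a3 i j)
    have := altLine_one (b3 i j)
    fin_cases k
    simp_all
  · funext i j k
    have x := altLine_two (a3 i j)
    have y := altLine_two (b3 i j)
    have z := hL i j
    simp [ashl, Fin.sum_univ_two] at x y z
    fin_cases k <;> simp <;> omega
  · have off : ∀ i j, (0 ≤ A i j 1 ∧ 0 ≤ B i j 1) → ∀ k, A i j k = B i j k := by
      intro i j hp k
      have x := altLine_three (a3 i j)
      have y := altLine_three (b3 i j)
      have z := hL i j
      simp [ashl, Fin.sum_univ_three] at x y z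
      fin_cases k <;> simp <;> omega
    have c0 : ∀ j k, A 0 j k = B 0 j k := fun j =>
      off 0 j ⟨(altLine_three (a1 j 1)).2.1, (altLine_three (b1 j 1)).2.1⟩
    have c2 : ∀ j k, A 2 j k = B 2 j k := fun j =>
      off 2 j ⟨(altLine_three (a1 j 1)).2.2.1, (altLine_three (b1 j 1)).2.2.1⟩
    funext i j k
    have x := (altLine_three (a1 j k)).1
    have y := (altLine_three (b1 j k)).1
    have u := c0 j k
    have v := c2 j k
    fin_cases i <;> simp at x y ⊢ <;> omega
end

section
/- Two alternating sign hypermatrices with the same corresponding ASHL can have different numbers of nonzero entries: there exist 8 × 8 × 8 ASHMs A and B with L(A) = L(B) such that A has 68 nonzero entries and B has 76 nonzero entries. -/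
open Finset

/-- Depth table: away from a few exceptional vertical lines, the vertical line at `(i, j)`
has a single `+1`, at the depth listed here (planes indexed `0,…,7`). -/
def depthTable : List (List ℕ) :=
  [[7, 4, 3, 6, 5, 1, 2, 0],
   [0, 3, 5, 2, 4, 6, 7, 1],
   [6, 2, 1, 4, 0, 5, 4, 3],
   [5, 1, 4, 0, 2, 4, 3, 6],
   [3, 5, 0, 1, 4, 7, 6, 2],
   [4, 6, 2, 5, 3, 0, 1, 7],
   [1, 0, 7, 3, 6, 2, 5, 4],
   [2, 7, 6, 4, 1, 3, 0, 5]]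

/-- The vertical line with a single `+1` at the tabulated depth. -/
def plainEntry (i j k : ℕ) : ℤ :=
  if (depthTable.getD i []).getD j 0 = k then 1 else 0

/-- The first witness (two entries equal to `-1`). -/
def witA (i j k : Fin 8) : ℤ :=
  if (i.val = 2 ∧ j.val = 4) ∨ (i.val = 3 ∧ j.val = 3) then
    ([1, 0, 0, 0, -1, 0, 0, 1] : List ℤ).getD k.val 0
  else plainEntry i.val j.val k.val

/-- The second witness (six entries equal to `-1`). -/
def witB (i j k : Fin 8) : ℤ :=
  if i.val = 2 ∧ j.val = 3 then
    ([1, 0, -1, 0, 0, 1, -1, 1] : List ℤ).getD k.val 0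
  else if i.val = 3 ∧ j.val = 4 then
    ([1, 0, 0, 0, -1, 1, -1, 1] : List ℤ).getD k.val 0
  else if (i.val = 2 ∧ j.val = 4) ∨ (i.val = 3 ∧ j.val = 3) then
    ([0, 0, 1, 0, 0, -1, 1, 0] : List ℤ).getD k.val 0
  else plainEntry i.val j.val k.val

/-- A sufficient, computable criterion for `AltLine`. -/
theorem altLine_of_mem {n : ℕ} (f : Fin n → ℤ)
    (h : nonzeroList f ∈ ([[1], [1, -1, 1], [1, -1, 1, -1, 1]] : List (List ℤ))) :
    AltLine f := by
  unfold AltLine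
  generalize nonzeroList f = l at h
  simp only [List.mem_cons, List.not_mem_nil, or_false] at h
  rcases h with rfl | rfl | rfl <;> refine ⟨by simp, ?_, by simp⟩ <;> intro i hi <;>
    simp only [List.length_cons, List.length_nil] at hi <;> interval_cases i <;> simp

theorem witA_isASHM : IsASHM witA := by
  refine ⟨fun j k => altLine_of_mem _ ?_, fun i k => altLine_of_mem _ ?_,
    fun i j => altLine_of_mem _ ?_⟩
  · revert j k; decide +kernel
  · revert i k; decide +kernel
  · revert i j; decide +kernel

theorem witB_isASHM : IsASHM witB := by
  refine ⟨fun j k => altLine_of_mem _ ?_, fun i k => altLine_of_mem _ ?_,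
    fun i j => altLine_of_mem _ ?_⟩
  · revert j k; decide +kernel
  · revert i k; decide +kernel
  · revert i j; decide +kernel

theorem ashl_witA_eq : ashl witA = ashl witB := by
  have h : ∀ i j, ashl witA i j = ashl witB i j := by
    unfold ashl
    decide +kernel
  funext i j
  exact h i j

theorem shared_ashl_different_support_sizes :
    ∃ A B : Fin 8 → Fin 8 → Fin 8 → ℤ,
      IsASHM A ∧ IsASHM B ∧ ashl A = ashl B ∧
      (Finset.univ.filter
        (fun p : Fin 8 × Fin 8 × Fin 8 => A p.1 p.2.1 p.2.2 ≠ 0)).card = 68 ∧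
      (Finset.univ.filter
        (fun p : Fin 8 × Fin 8 × Fin 8 => B p.1 p.2.1 p.2.2 ≠ 0)).card = 76 := by
  exact ⟨witA, witB, witA_isASHM, witB_isASHM, ashl_witA_eq, by decide +kernel,
    by decide +kernel⟩
end

section
/- For every odd n ≥ 7 there exists an n × n × n alternating sign hypermatrix A such that the value (n+1)/2 occurs exactly (n² + 4n − 19)/2 times as an entry of L(A). -/
open Finset

/-! ### Alternation from prefix sums -/

/-- Prefix sums of the list, started at `c`, stay in `{0,1}` and end at `1`. -/
def RunOK : ℤ → List ℤ → Prop
  | c, [] => c = 1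
  | c, a :: l => (c + a = 0 ∨ c + a = 1) ∧ RunOK (c + a) l

theorem RunOK.spec (l : List ℤ) : ∀ c : ℤ, (c = 0 ∨ c = 1) → RunOK c l →
    (∀ i : ℕ, ∀ h : i < (l.filter (· != 0)).length,
      (l.filter (· != 0)).get ⟨i, h⟩ = (-1 : ℤ) ^ i * (1 - 2 * c)) ∧
    ((l.filter (· != 0)).getLast? = some 1 ∨ (c = 1 ∧ l.filter (· != 0) = [])) := by
  induction l with
  | nil => intro c hc h; simpa [RunOK] using h
  | cons a l ih =>
    intro c hc h
    obtain ⟨h1, h2⟩ := h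
    obtain ⟨ih1, ih2⟩ := ih (c + a) h1 h2
    by_cases ha : a = 0
    · subst ha
      simp only [add_zero] at ih1 ih2
      simpa using And.intro ih1 ih2
    · have ha' : (a :: l).filter (· != 0) = a :: l.filter (· != 0) := by simp [ha]
      have hca : a = 1 - 2 * c := by omega
      rw [ha']
      refine ⟨?_, ?_⟩
      · intro i h
        cases i with
        | zero => simpa using hca
        | succ i =>
          have := ih1 i (by simpa using h)
          simp only [List.get_eq_getElem, List.getElem_cons_succ] at this ⊢
          rw [this, pow_succ, hca]; ring
      · left
        rcases ih2 with h | ⟨h, h'⟩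
        · rw [List.getLast?_cons, h]; rfl
        · rw [h']; simp; omega

theorem runOK_ofFn : ∀ (n : ℕ) (f : Fin n → ℤ) (s : ℕ → ℤ),
    (∀ i, s i = 0 ∨ s i = 1) → s n = 1 → (∀ i : Fin n, s (i + 1) = s i + f i) →
    RunOK (s 0) (List.ofFn f) := by
  intro n
  induction n with
  | zero => intro f s _ h1 _; simpa [RunOK] using h1
  | succ n ih =>
    intro f s h0 h1 h2
    rw [List.ofFn_succ]
    have h3 := h2 0
    simp only [Fin.val_zero, zero_add] at h3
    refine ⟨?_, ?_⟩
    · rw [← h3]; exact h0 1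
    · rw [← h3]
      exact ih (fun i => f i.succ) (fun i => s (i + 1)) (fun i => h0 _) h1
        (fun i => by simpa using h2 i.succ)

theorem altLine_of_state {n : ℕ} (f : Fin n → ℤ) (s : ℕ → ℤ)
    (h0 : ∀ i, s i = 0 ∨ s i = 1) (hs0 : s 0 = 0) (h1 : s n = 1)
    (h2 : ∀ i : Fin n, s (i + 1) = s i + f i) : AltLine f := by
  have h := runOK_ofFn n f s h0 h1 h2
  rw [hs0] at h
  have hl : (List.finRange n).map f = List.ofFn f := by simp [List.ofFn_eq_map]
  have h' := RunOK.spec _ 0 (Or.inl rfl) h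
  obtain ⟨ha, hb⟩ := h'
  have hb' : ((List.ofFn f).filter (· != 0)).getLast? = some 1 := by
    rcases hb with hb | hb
    · exact hb
    · omega
  unfold AltLine nonzeroList
  rw [hl]
  refine ⟨?_, ?_, hb'⟩
  · intro hnil; rw [hnil] at hb'; simp at hb'
  · intro i hi; rw [ha i hi]; ring

open Classical in
/-- Version with centred integer coordinates and a state predicate. -/
theorem altLine_centered (m : ℕ) (g : ℤ → ℤ) (s : ℤ → Prop)
    (hs0 : ¬ s (-m - 1)) (h1 : s m)
    (h2 : ∀ x : ℤ, -m ≤ x → x ≤ m →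
      (if s x then (1 : ℤ) else 0) = (if s (x - 1) then 1 else 0) + g x) :
    AltLine (fun i : Fin (2 * m + 1) => g ((i : ℕ) - m)) := by
  refine altLine_of_state _ (fun i : ℕ => if s ((i : ℤ) - m - 1) then (1 : ℤ) else 0) ?_ ?_ ?_ ?_
  · intro i; split_ifs <;> simp
  · have : ((0 : ℕ) : ℤ) - m - 1 = -m - 1 := by omega
    simp only [this, if_neg hs0]
  · have : ((2 * m + 1 : ℕ) : ℤ) - m - 1 = m := by omega
    simp only [this, if_pos h1]
  · intro i
    have := h2 ((i : ℕ) - m) (by omega) (by omega)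
    have e : (((i : ℕ) + 1 : ℕ) : ℤ) - m - 1 = (i : ℕ) - m := by omega
    simp only [e]
    exact this

/-! ### The construction -/

/-- The plane at distance `a` below the middle plane. -/
def planeB (m a x y : ℤ) : ℤ :=
  if x + y ≤ m - a ∧ x - y ≤ m - a ∧ -x + y ≤ m - a ∧ -x - y ≤ m - a then
    (if (x + y + a + m) % 2 = 0 then 1 else -1)
  else if a = 1 then
    (if x - y = m + 2 ∨ y - x = m + 2 then 1
     else if (x - y = m + 1 ∨ y - x = m + 1) ∧ x < m ∧ y < m ∧ -m < x ∧ -m < y then -1 else 0)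
  else if a = m - 1 then
    (if x - y = 2 * m ∨ y - x = 2 * m then 1
     else if (x + y = m + 1 ∨ x + y = -(m + 1)) ∧ x < m ∧ y < m ∧ -m < x ∧ -m < y then 1 else 0)
  else if x - y = 2 * m + 1 - a ∨ y - x = 2 * m + 1 - a then 1 else 0

/-- The hypermatrix in centred coordinates. -/
def hyperB (m x y z : ℤ) : ℤ :=
  if z ≤ 0 then planeB m (-z) x y else planeB m z x (-y)

theorem planeB_comm (m a x y : ℤ) : planeB m a x y = planeB m a y x := by
  unfold planeB
  split_ifs <;> omega

theorem planeB_neg (m a x y : ℤ) : planeB m a (-x) (-y) = planeB m a x y := by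
  unfold planeB
  split_ifs <;> omega

theorem hyperB_comm (m x y z : ℤ) : hyperB m x y z = hyperB m y x z := by
  unfold hyperB
  split_ifs
  · exact planeB_comm ..
  · rw [planeB_comm, ← planeB_neg, neg_neg]

theorem hyperB_neg (m x y z : ℤ) : hyperB m (-x) (-y) z = hyperB m x y z := by
  unfold hyperB
  split_ifs
  · exact planeB_neg ..
  · exact planeB_neg ..

set_option maxHeartbeats 4000000 in
theorem alt_planeB (m : ℕ) (hm : 3 ≤ m) (a y : ℤ) (ha : 0 ≤ a) (ham : a ≤ m)
    (hy : -m ≤ y) (hy' : y ≤ m) :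
    AltLine (fun i : Fin (2 * m + 1) => planeB m a ((i : ℕ) - m) y) := by
  have single : ∀ c : ℤ, -m ≤ c → c ≤ m →
      (∀ x : ℤ, -m ≤ x → x ≤ m → planeB m a x y = if x = c then 1 else 0) →
      AltLine (fun i : Fin (2 * m + 1) => planeB m a ((i : ℕ) - m) y) := by
    intro c hc hc' h
    refine altLine_centered m (fun x => planeB m a x y) (fun x => c ≤ x) (by omega) hc' ?_
    intro x hx hx'
    rw [h x hx hx']
    split_ifs <;> omega
  have diam : ∀ r : ℤ, 0 ≤ r → r ≤ m → (r = m - a - y ∨ r = m - a + y) → r ≤ m - a - y →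
      r ≤ m - a + y → (a ≠ 1 ∨ (-1 ≤ y ∧ y ≤ 1)) →
      AltLine (fun i : Fin (2 * m + 1) => planeB m a ((i : ℕ) - m) y) := by
    intro r hr hrm h1 h2 h3 h4
    refine altLine_centered m (fun x => planeB m a x y)
      (fun x => r ≤ x ∨ (-r ≤ x ∧ (x + r) % 2 = 0)) (by omega) (by omega) ?_
    intro x hx hx'
    unfold planeB
    split_ifs <;> omega
  by_cases hr : y ≤ m - a ∧ -y ≤ m - a
  · by_cases h1 : a ≠ 1 ∨ (-1 ≤ y ∧ y ≤ 1)
    · rcases le_total 0 y with h | h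
      · exact diam (m - a - y) (by omega) (by omega) (by omega) (by omega) (by omega) h1
      · exact diam (m - a + y) (by omega) (by omega) (by omega) (by omega) (by omega) h1
    · obtain rfl : a = 1 := by omega
      rcases le_total 0 y with h | h
      · refine altLine_centered m (fun x => planeB m 1 x y)
          (fun x => m - 1 - y ≤ x ∨ (-(m - 1 - y) ≤ x ∧ (x + (m - 1 - y)) % 2 = 0) ∨
            x = y - m - 2) (by omega) (by omega) ?_
        intro x hx hx'
        unfold planeB
        split_ifs <;> omega
      · refine altLine_centered m (fun x => planeB m 1 x y)
          (fun x => x ≠ y + m + 1 ∧ (m - 1 + y ≤ x ∨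
            (-(m - 1 + y) ≤ x ∧ (x + (m - 1 + y)) % 2 = 0))) (by omega) (by omega) ?_
        intro x hx hx'
        unfold planeB
        split_ifs <;> omega
  · have key : ∃ c : ℤ, -m ≤ c ∧ c ≤ m ∧
        ((a = 1 ∧ (y = m ∧ c = -2 ∨ y = -m ∧ c = 2)) ∨
         (a ≠ 1 ∧ a = m - 1 ∧ (y = m ∧ c = -m ∨ y = -m ∧ c = m ∨
            (2 ≤ y ∧ y < m ∧ c = m + 1 - y) ∨ (y ≤ -2 ∧ -m < y ∧ c = -(m + 1) - y))) ∨
         (a ≠ 1 ∧ a ≠ m - 1 ∧ (0 < y ∧ c = y - (2 * m + 1 - a) ∨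
            y < 0 ∧ c = y + (2 * m + 1 - a)))) := by
      by_cases h1 : a = 1
      · rcases le_total 0 y with h | h
        · exact ⟨-2, by omega⟩
        · exact ⟨2, by omega⟩
      · by_cases h2 : a = m - 1
        · by_cases h3 : y = m
          · exact ⟨-m, by omega⟩
          · by_cases h4 : y = -m
            · exact ⟨m, by omega⟩
            · rcases le_total 0 y with h | h
              · exact ⟨m + 1 - y, by omega⟩
              · exact ⟨-(m + 1) - y, by omega⟩
        · rcases le_total 0 y with h | h
          · exact ⟨y - (2 * m + 1 - a), by omega⟩
          · exact ⟨y + (2 * m + 1 - a), by omega⟩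
    obtain ⟨c, hc, hc', h⟩ := key
    refine single c hc hc' ?_
    intro x hx hx'
    unfold planeB
    rcases h with h | h | h
    · split_ifs <;> omega
    · split_ifs <;> omega
    · split_ifs <;> omega

theorem alt_row (m : ℕ) (hm : 3 ≤ m) (y z : ℤ) (hz : -m ≤ z) (hz' : z ≤ m)
    (hy : -m ≤ y) (hy' : y ≤ m) :
    AltLine (fun i : Fin (2 * m + 1) => hyperB m ((i : ℕ) - m) y z) := by
  unfold hyperB
  split_ifs with h
  · exact alt_planeB m hm (-z) y (by omega) (by omega) hy hy'
  · exact alt_planeB m hm z (-y) (by omega) (by omega) (by omega) (by omega)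

/-! ### Vertical lines -/

/-- The diamond. -/
def InDiam (m x y : ℤ) : Prop := x + y ≤ m ∧ x - y ≤ m ∧ -x + y ≤ m ∧ -x - y ≤ m

/-- The extra cells. -/
def InExtra (m x y : ℤ) : Prop :=
  (x + y = m + 1 ∨ x + y = -(m + 1) ∨ x - y = m + 1 ∨ y - x = m + 1) ∧
    x < m ∧ y < m ∧ -m < x ∧ -m < y

/-- Description of a vertical line. -/
def VertOK (m : ℕ) (x y : ℤ) : Prop :=
  (InDiam m x y ∧ (∃ r : ℤ, 0 ≤ r ∧ r ≤ m ∧ ∀ z : ℤ, -m ≤ z → z ≤ m → hyperB m x y z =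
      if -r ≤ z ∧ z ≤ r then (if (z + r) % 2 = 0 then 1 else -1) else 0)) ∨
  (¬ InDiam m x y ∧ InExtra m x y ∧ ((∀ z : ℤ, -m ≤ z → z ≤ m → hyperB m x y z =
      (if z = -m then 1 else 0) - (if z = -1 then 1 else 0) + (if z = m - 1 then 1 else 0)) ∨
    (∀ z : ℤ, -m ≤ z → z ≤ m → hyperB m x y z =
      (if z = m then 1 else 0) - (if z = 1 then 1 else 0) + (if z = -(m - 1) then 1 else 0)))) ∨
  (¬ InDiam m x y ∧ ¬ InExtra m x y ∧ ∃ c : ℤ, -m ≤ c ∧ c ≤ m ∧ c ≠ 0 ∧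
    ∀ z : ℤ, -m ≤ z → z ≤ m → hyperB m x y z = if z = c then 1 else 0)

set_option maxHeartbeats 4000000 in
theorem vertOK_aux (m : ℕ) (hm : 3 ≤ m) (x y : ℤ) (hx' : x ≤ m)
    (h1 : y ≤ x) (h2 : -y ≤ x) : VertOK m x y := by
  by_cases hd : InDiam m x y
  · left
    refine ⟨hd, ?_⟩
    unfold InDiam at hd
    rcases le_total 0 y with h | h
    · refine ⟨m - x - y, by omega, by omega, ?_⟩
      intro z hz hz'
      unfold hyperB planeB
      split_ifs <;> omega
    · refine ⟨m - x + y, by omega, by omega, ?_⟩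
      intro z hz hz'
      unfold hyperB planeB
      split_ifs <;> omega
  · right
    by_cases he : InExtra m x y
    · left
      refine ⟨hd, he, ?_⟩
      unfold InDiam at hd
      unfold InExtra at he
      rcases le_total 0 y with h | h
      · right
        intro z hz hz'
        unfold hyperB planeB
        split_ifs <;> omega
      · left
        intro z hz hz'
        unfold hyperB planeB
        split_ifs <;> omega
    · right
      refine ⟨hd, he, ?_⟩
      unfold InDiam at hd
      unfold InExtra at he
      have key : ∃ d t : ℤ, 1 ≤ t ∧ t ≤ m ∧ (d = m + 1 ∧ x = m ∧ t = m ∨ d = m + 2 ∧ t = 1 ∨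
          d = 2 * m ∧ t = m - 1 ∨ m + 3 ≤ d ∧ d < 2 * m ∧ t = 2 * m + 1 - d) ∧
          (0 ≤ y ∧ d = x + y ∨ y ≤ 0 ∧ d = x - y) := by
        have : ∃ d : ℤ, (0 ≤ y ∧ d = x + y ∨ y ≤ 0 ∧ d = x - y) := by
          rcases le_total 0 y with h | h
          · exact ⟨x + y, by omega⟩
          · exact ⟨x - y, by omega⟩
        obtain ⟨d, hd'⟩ := this
        by_cases e1 : d = m + 1
        · exact ⟨d, m, by omega⟩
        by_cases e2 : d = m + 2
        · exact ⟨d, 1, by omega⟩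
        by_cases e3 : d = 2 * m
        · exact ⟨d, m - 1, by omega⟩
        exact ⟨d, 2 * m + 1 - d, by omega⟩
      obtain ⟨d, t, ht1, htm, hdt, hdy⟩ := key
      rcases hdy with ⟨h, hdy⟩ | ⟨h, hdy⟩
      · refine ⟨t, by omega, by omega, by omega, ?_⟩
        intro z hz hz'
        unfold hyperB planeB
        rcases hdt with h | h | h | h <;> split_ifs <;> omega
      · refine ⟨-t, by omega, by omega, by omega, ?_⟩
        intro z hz hz'
        unfold hyperB planeB
        rcases hdt with h | h | h | h <;> split_ifs <;> omega

theorem VertOK.comm {m : ℕ} {x y : ℤ} (h : VertOK m x y) : VertOK m y x := by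
  have e1 : InDiam m y x ↔ InDiam m x y := by unfold InDiam; omega
  have e2 : InExtra m y x ↔ InExtra m x y := by unfold InExtra; omega
  unfold VertOK at *
  simp only [e1, e2, hyperB_comm m y x]
  exact h

theorem VertOK.neg {m : ℕ} {x y : ℤ} (h : VertOK m (-x) (-y)) : VertOK m x y := by
  have e1 : InDiam m (-x) (-y) ↔ InDiam m x y := by unfold InDiam; omega
  have e2 : InExtra m (-x) (-y) ↔ InExtra m x y := by unfold InExtra; omega
  unfold VertOK at *
  simp only [e1, e2, hyperB_neg m x y] at h
  exact h

theorem vertOK (m : ℕ) (hm : 3 ≤ m) (x y : ℤ) (hx : -m ≤ x) (hx' : x ≤ m)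
    (hy : -m ≤ y) (hy' : y ≤ m) : VertOK m x y := by
  by_cases h1 : y ≤ x
  · by_cases h2 : -y ≤ x
    · exact vertOK_aux m hm x y hx' h1 h2
    · exact (vertOK_aux m hm (-y) (-x) (by omega) (by omega) (by omega)).comm.neg
  · by_cases h2 : -y ≤ x
    · exact (vertOK_aux m hm y x (by omega) (by omega) (by omega)).comm
    · exact (vertOK_aux m hm (-x) (-y) (by omega) (by omega) (by omega)).neg

theorem alt_vert (m : ℕ) (hm : 3 ≤ m) (x y : ℤ) (h : VertOK m x y) :
    AltLine (fun k : Fin (2 * m + 1) => hyperB m x y ((k : ℕ) - m)) := by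
  rcases h with ⟨-, r, hr, hrm, h⟩ | ⟨-, -, h | h⟩ | ⟨-, -, c, hc, hc', -, h⟩
  · refine altLine_centered m (fun z => hyperB m x y z)
      (fun z => r ≤ z ∨ (-r ≤ z ∧ (z + r) % 2 = 0)) (by omega) (by omega) ?_
    intro z hz hz'
    rw [h z hz hz']
    split_ifs <;> omega
  · refine altLine_centered m (fun z => hyperB m x y z)
      (fun z => (-m ≤ z ∧ z < -1) ∨ m - 1 ≤ z) (by omega) (by omega) ?_
    intro z hz hz'
    rw [h z hz hz']
    split_ifs <;> omega
  · refine altLine_centered m (fun z => hyperB m x y z)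
      (fun z => (-(m - 1) ≤ z ∧ z < 1) ∨ m ≤ z) (by omega) (by omega) ?_
    intro z hz hz'
    rw [h z hz hz']
    split_ifs <;> omega
  · refine altLine_centered m (fun z => hyperB m x y z) (fun z => c ≤ z) (by omega) (by omega) ?_
    intro z hz hz'
    rw [h z hz hz']
    split_ifs <;> omega

/-! ### The entries of the Latin-like square -/

theorem sum_fin_centered (m : ℕ) (g : ℤ → ℤ) :
    ∑ k : Fin (2 * m + 1), g ((k : ℕ) - m) = ∑ z ∈ Finset.Icc (-m : ℤ) m, g z := by
  refine Finset.sum_bij (fun (k : Fin (2 * m + 1)) _ => ((k : ℕ) : ℤ) - m) ?_ ?_ ?_ ?_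
  · intro k _; rw [Finset.mem_Icc]; omega
  · intro a _ b _ h; apply Fin.ext; omega
  · intro z hz
    rw [Finset.mem_Icc] at hz
    exact ⟨⟨(z + m).toNat, by omega⟩, Finset.mem_univ _, by simp only []; omega⟩
  · intro k _; rfl

theorem sum_diam (m : ℕ) (r : ℤ) (hr : 0 ≤ r) (hrm : r ≤ m) :
    ∑ z ∈ Finset.Icc (-m : ℤ) m,
      (if -r ≤ z ∧ z ≤ r then (if (z + r) % 2 = 0 then (1 : ℤ) else -1) else 0) = 1 := by
  rw [← sum_fin_centered, Fin.sum_univ_eq_sum_range (fun k : ℕ =>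
    (if -r ≤ (k : ℤ) - m ∧ (k : ℤ) - m ≤ r then
      (if ((k : ℤ) - m + r) % 2 = 0 then (1 : ℤ) else -1) else 0))]
  have h : ∀ k : ℕ, (if -r ≤ (k : ℤ) - m ∧ (k : ℤ) - m ≤ r then
      (if ((k : ℤ) - m + r) % 2 = 0 then (1 : ℤ) else -1) else 0) =
      (fun k : ℕ => if r ≤ (k : ℤ) - m - 1 ∨
        (-r ≤ (k : ℤ) - m - 1 ∧ ((k : ℤ) - m - 1 + r) % 2 = 0) then (1 : ℤ) else 0) (k + 1) -
      (fun k : ℕ => if r ≤ (k : ℤ) - m - 1 ∨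
        (-r ≤ (k : ℤ) - m - 1 ∧ ((k : ℤ) - m - 1 + r) % 2 = 0) then (1 : ℤ) else 0) k := by
    intro k
    push_cast
    split_ifs <;> omega
  rw [Finset.sum_congr rfl (fun k _ => h k), Finset.sum_range_sub (fun k : ℕ => if r ≤ (k : ℤ) - m - 1 ∨
        (-r ≤ (k : ℤ) - m - 1 ∧ ((k : ℤ) - m - 1 + r) % 2 = 0) then (1 : ℤ) else 0)]
  push_cast
  split_ifs <;> omega

theorem sum_diam_odd (m : ℕ) (r : ℤ) :
    ∑ z ∈ Finset.Icc (-m : ℤ) m,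
      z * (if -r ≤ z ∧ z ≤ r then (if (z + r) % 2 = 0 then (1 : ℤ) else -1) else 0) = 0 := by
  have h : ∑ z ∈ Finset.Icc (-m : ℤ) m,
      z * (if -r ≤ z ∧ z ≤ r then (if (z + r) % 2 = 0 then (1 : ℤ) else -1) else 0) =
      ∑ z ∈ Finset.Icc (-m : ℤ) m,
      -(z * (if -r ≤ z ∧ z ≤ r then (if (z + r) % 2 = 0 then (1 : ℤ) else -1) else 0)) := by
    refine Finset.sum_bij (fun z _ => -z) ?_ ?_ ?_ ?_
    · intro z hz; rw [Finset.mem_Icc] at *; omega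
    · intro a _ b _ h; omega
    · intro z hz; rw [Finset.mem_Icc] at hz
      exact ⟨-z, by rw [Finset.mem_Icc]; omega, by omega⟩
    · intro z _
      split_ifs <;> omega
  rw [Finset.sum_neg_distrib] at h
  omega

theorem sum_pick (m : ℕ) (c : ℤ) (h : -m ≤ c) (h' : c ≤ m) (g : ℤ → ℤ) :
    ∑ z ∈ Finset.Icc (-m : ℤ) m, g z * (if z = c then (1 : ℤ) else 0) = g c := by
  simp only [mul_ite, mul_one, mul_zero]
  rw [Finset.sum_ite_eq', if_pos (Finset.mem_Icc.2 ⟨h, h'⟩)]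

/-- The hypermatrix. -/
def hyperA (m : ℕ) (i j k : Fin (2 * m + 1)) : ℤ :=
  hyperB m ((i : ℕ) - m) ((j : ℕ) - m) ((k : ℕ) - m)

theorem hyperA_isASHM (m : ℕ) (hm : 3 ≤ m) : IsASHM (hyperA m) := by
  refine ⟨?_, ?_, ?_⟩
  · intro j k
    exact alt_row m hm _ _ (by omega) (by omega) (by omega) (by omega)
  · intro i k
    unfold hyperA
    simp only [hyperB_comm m ((i : ℕ) - m)]
    exact alt_row m hm _ _ (by omega) (by omega) (by omega) (by omega)
  · intro i j
    exact alt_vert m hm _ _ (vertOK m hm _ _ (by omega) (by omega) (by omega) (by omega))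

theorem ashl_hyperA (m : ℕ) (hm : 3 ≤ m) (i j : Fin (2 * m + 1)) :
    ashl (hyperA m) i j = m + 1 ↔
      (InDiam m ((i : ℕ) - m) ((j : ℕ) - m) ∨ InExtra m ((i : ℕ) - m) ((j : ℕ) - m)) := by
  have hv := vertOK m hm ((i : ℕ) - m) ((j : ℕ) - m) (by omega) (by omega) (by omega) (by omega)
  have hs : ashl (hyperA m) i j = ∑ z ∈ Finset.Icc (-m : ℤ) m,
      (z + m + 1) * hyperB m ((i : ℕ) - m) ((j : ℕ) - m) z := by
    rw [← sum_fin_centered]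
    unfold ashl hyperA
    refine Finset.sum_congr rfl fun k _ => ?_
    ring
  rw [hs]
  generalize (((i : ℕ) : ℤ) - m) = x at *
  generalize (((j : ℕ) : ℤ) - m) = y at *
  rcases hv with ⟨hd, r, hr, hrm, h⟩ | ⟨-, he, h | h⟩ | ⟨hd, he, c, hc, hc', hc0, h⟩
  · simp only [hd, true_or, iff_true]
    rw [Finset.sum_congr rfl (fun z hz => by
      rw [h z (Finset.mem_Icc.1 hz).1 (Finset.mem_Icc.1 hz).2, add_assoc, add_mul]),
      Finset.sum_add_distrib, sum_diam_odd, ← Finset.mul_sum, sum_diam m r hr hrm]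
    ring
  · simp only [he, or_true, iff_true]
    rw [Finset.sum_congr rfl (fun z hz => by
      rw [h z (Finset.mem_Icc.1 hz).1 (Finset.mem_Icc.1 hz).2, mul_add, mul_sub]),
      Finset.sum_add_distrib, Finset.sum_sub_distrib,
      sum_pick m _ (by omega) (by omega) (fun z => z + m + 1),
      sum_pick m _ (by omega) (by omega) (fun z => z + m + 1),
      sum_pick m _ (by omega) (by omega) (fun z => z + m + 1)]
    ring
  · simp only [he, or_true, iff_true]
    rw [Finset.sum_congr rfl (fun z hz => by
      rw [h z (Finset.mem_Icc.1 hz).1 (Finset.mem_Icc.1 hz).2, mul_add, mul_sub]),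
      Finset.sum_add_distrib, Finset.sum_sub_distrib,
      sum_pick m _ (by omega) (by omega) (fun z => z + m + 1),
      sum_pick m _ (by omega) (by omega) (fun z => z + m + 1),
      sum_pick m _ (by omega) (by omega) (fun z => z + m + 1)]
    ring
  · simp only [hd, he, or_false, iff_false]
    rw [Finset.sum_congr rfl (fun z hz => by
      rw [h z (Finset.mem_Icc.1 hz).1 (Finset.mem_Icc.1 hz).2]),
      sum_pick m _ (by omega) (by omega) (fun z => z + m + 1)]
    omega

/-! ### Counting -/

/-- Half-width of the set of middle entries in row `i`. -/
def halfW (m i : ℕ) : ℕ :=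
  if i ≤ m then (if i = 0 then 0 else if i + 2 ≤ m then i + 1 else i)
  else (if i = 2 * m then 0 else if m + 2 ≤ i then 2 * m + 1 - i else 2 * m - i)

theorem mem_row (m : ℕ) (hm : 3 ≤ m) (i j : ℕ) (hi : i < 2 * m + 1) (hj : j < 2 * m + 1) :
    (InDiam m ((i : ℕ) - m) ((j : ℕ) - m) ∨ InExtra m ((i : ℕ) - m) ((j : ℕ) - m)) ↔
      j ∈ Finset.Icc (m - halfW m i) (m + halfW m i) := by
  rw [Finset.mem_Icc]
  unfold InDiam InExtra halfW
  split_ifs <;> omega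

theorem row_card (m : ℕ) (hm : 3 ≤ m) (i : Fin (2 * m + 1)) :
    (Finset.univ.filter (fun j : Fin (2 * m + 1) => ashl (hyperA m) i j = m + 1)).card =
      2 * halfW m i + 1 := by
  have hw : halfW m i ≤ m := by unfold halfW; split_ifs <;> omega
  have : (Finset.univ.filter (fun j : Fin (2 * m + 1) => ashl (hyperA m) i j = m + 1)).map
      Fin.valEmbedding = Finset.Icc (m - halfW m i) (m + halfW m i) := by
    ext j
    simp only [Finset.mem_map, Finset.mem_filter, Finset.mem_univ, true_and,
      Fin.valEmbedding_apply]
    constructor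
    · rintro ⟨j, h, rfl⟩
      rw [ashl_hyperA m hm, mem_row m hm _ _ i.2 j.2] at h
      exact h
    · intro h
      have hj : j < 2 * m + 1 := by rw [Finset.mem_Icc] at h; omega
      refine ⟨⟨j, hj⟩, ?_, rfl⟩
      rw [ashl_hyperA m hm, mem_row m hm _ _ i.2 hj]
      exact h
  rw [← Finset.card_map Fin.valEmbedding, this, Nat.card_Icc]
  omega

theorem sum_aux (t : ℕ) : ∑ i ∈ Finset.range t, (2 * (i + 2) + 1) = t ^ 2 + 4 * t := by
  induction t with
  | zero => simp
  | succ t ih => rw [Finset.sum_range_succ, ih]; ring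

theorem sum_halfW (p : ℕ) :
    ∑ i ∈ Finset.range (2 * (p + 3) + 1), (2 * halfW (p + 3) i + 1) =
      2 * (p + 3) ^ 2 + 6 * (p + 3) - 7 := by
  have e : 2 * (p + 3) + 1 = (((p + 1) + 1) + 3) + ((p + 1) + 1) := by ring
  rw [e, Finset.sum_range_add _ _ ((p + 1) + 1), Finset.sum_range_add _ _ 3,
    Finset.sum_range_succ', Finset.sum_range_succ _ (p + 1)]
  have h1 : ∑ i ∈ Finset.range (p + 1), (2 * halfW (p + 3) (i + 1) + 1) =
      (p + 1) ^ 2 + 4 * (p + 1) := by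
    rw [← sum_aux]
    refine Finset.sum_congr rfl fun i hi => ?_
    rw [Finset.mem_range] at hi
    unfold halfW
    split_ifs <;> first | omega | contradiction
  have h2 : ∑ i ∈ Finset.range (p + 1), (2 * halfW (p + 3) (p + 1 + 1 + 3 + i) + 1) =
      (p + 1) ^ 2 + 4 * (p + 1) := by
    rw [← sum_aux, ← Finset.sum_range_reflect (fun i => 2 * (i + 2) + 1)]
    refine Finset.sum_congr rfl fun i hi => ?_
    rw [Finset.mem_range] at hi
    beta_reduce
    unfold halfW
    split_ifs <;> omega
  have h3 : ∑ i ∈ Finset.range 3, (2 * halfW (p + 3) (p + 1 + 1 + i) + 1) = 6 * p + 17 := by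
    have w0 : halfW (p + 3) (p + 1 + 1 + 0) = p + 2 := by unfold halfW; split_ifs <;> omega
    have w1 : halfW (p + 3) (p + 1 + 1 + 1) = p + 3 := by unfold halfW; split_ifs <;> omega
    have w2 : halfW (p + 3) (p + 1 + 1 + 2) = p + 2 := by unfold halfW; split_ifs <;> omega
    simp only [Finset.sum_range_succ, Finset.sum_range_zero, w0, w1, w2]
    omega
  have h4 : halfW (p + 3) 0 = 0 := by simp [halfW]
  have h5 : halfW (p + 3) (p + 1 + 1 + 3 + (p + 1)) = 0 := by
    unfold halfW
    split_ifs <;> omega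
  rw [h1, h2, h3, h4, h5]
  have : 2 * (p + 3) ^ 2 + 6 * (p + 3) = 2 * p ^ 2 + 18 * p + 36 := by ring
  rw [this]
  have : (p + 1) ^ 2 = p ^ 2 + 2 * p + 1 := by ring
  omega

theorem ashl_repeated_value_odd (n : ℕ) (hodd : Odd n) (hn : 7 ≤ n) :
    ∃ A : Fin n → Fin n → Fin n → ℤ, IsASHM A ∧
      (Finset.univ.filter
        (fun p : Fin n × Fin n =>
          ashl A p.1 p.2 = (((n + 1) / 2 : ℕ) : ℤ))).card =
        (n ^ 2 + 4 * n - 19) / 2 := by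

  obtain ⟨m, rfl⟩ := hodd
  have hm : 3 ≤ m := by omega
  refine ⟨hyperA m, hyperA_isASHM m hm, ?_⟩
  have hmid : (((2 * m + 1 + 1) / 2 : ℕ) : ℤ) = m + 1 := by omega
  rw [hmid, Finset.card_filter, Fintype.sum_prod_type]
  have hrow : ∀ i : Fin (2 * m + 1),
      (∑ j : Fin (2 * m + 1), if ashl (hyperA m) i j = m + 1 then 1 else 0) =
        2 * halfW m i + 1 := by
    intro i
    rw [← Finset.card_filter]
    exact row_card m hm i
  rw [Finset.sum_congr rfl (fun i _ => hrow i),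
    Fin.sum_univ_eq_sum_range (fun i => 2 * halfW m i + 1)]
  obtain ⟨p, rfl⟩ : ∃ p, m = p + 3 := ⟨m - 3, by omega⟩
  rw [sum_halfW]
  have e1 : (2 * (p + 3) + 1) ^ 2 + 4 * (2 * (p + 3) + 1) =
    2 * (2 * (p + 3) ^ 2 + 6 * (p + 3)) + 5 := by ring
  rw [e1]
  omega
end

section
/- For every even n ≥ 8 there exists an n × n × n alternating sign hypermatrix A such that the value n/2 occurs exactly (n² + 4n − 20)/2 times as an entry of L(A). In particular, for all n ≥ 7 there is an n × n ASHL in which some value occurs ⌊(n² + 4n − 19)/2⌋ times, which exceeds 2n. -/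
open Finset

set_option linter.unusedVariables false

/-- Partial-sum automaton: starting from state `b`, all partial sums stay in `{0,1}`, ending at 1. -/
def good : ℤ → List ℤ → Bool
  | b, [] => b == 1
  | b, x :: xs => (b + x == 0 || b + x == 1) && good (b + x) xs

def altList (L : List ℤ) : Prop :=
  L ≠ [] ∧ (∀ i : ℕ, ∀ h : i < L.length, L.get ⟨i, h⟩ = (-1 : ℤ) ^ i) ∧ L.getLast? = some 1

theorem good_aux (L : List ℤ) :
    (good 0 L = true → altList (L.filter (· != 0))) ∧
    (good 1 L = true → L.filter (· != 0) = [] ∨ altList (1 :: L.filter (· != 0))) := by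
  induction L with
  | nil => simp [good]
  | cons x xs ih =>
    obtain ⟨ih0, ih1⟩ := ih
    constructor
    · intro h
      simp only [good, Bool.and_eq_true, Bool.or_eq_true, beq_iff_eq] at h
      obtain ⟨h1 | h1, h2⟩ := h
      · have : x = 0 := by omega
        subst this
        simpa using ih0 (by simpa using h2)
      · have : x = 1 := by omega
        subst this
        rcases ih1 (by simpa using h2) with h3 | h3
        · simp [h3, altList]
        · simpa using h3
    · intro h
      simp only [good, Bool.and_eq_true, Bool.or_eq_true, beq_iff_eq] at h
      obtain ⟨h1 | h1, h2⟩ := h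
      · have : x = -1 := by omega
        subst this
        have h3 := ih0 (by simpa using h2)
        right
        obtain ⟨ha, hb, hc⟩ := h3
        have hf : List.filter (· != 0) ((-1 : ℤ) :: xs) = -1 :: List.filter (· != 0) xs := by
          simp
        rw [hf]
        refine ⟨by simp, ?_, ?_⟩
        · intro i hi
          match i, hi with
          | 0, _ => simp
          | 1, _ => simp
          | (k + 2), hi =>
            have := hb k (by simpa using hi)
            simp only [List.get_eq_getElem, List.getElem_cons_succ] at this ⊢
            rw [this, pow_add]; norm_num
        · rw [List.getLast?_cons_cons, List.getLast?_cons, hc]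
          simp
      · have : x = 0 := by omega
        subst this
        simpa using ih1 (by simpa using h2)

theorem altLine_of_good {n : ℕ} (f : Fin n → ℤ)
    (h : good 0 ((List.finRange n).map f) = true) : AltLine f :=
  (good_aux _).1 h

theorem good_ofFn {n : ℕ} (f : Fin n → ℤ) (S : ℕ → ℤ) (h1 : S n = 1)
    (h01 : ∀ i ≤ n, S i = 0 ∨ S i = 1) (hf : ∀ i : Fin n, f i = S (i + 1) - S i) :
    good (S 0) (List.ofFn f) = true := by
  induction n generalizing S with
  | zero => simp [good, h1]
  | succ n ih =>
    rw [List.ofFn_succ]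
    have e : S 0 + f 0 = S 1 := by rw [hf 0]; simp
    have h2 := h01 1 (by omega)
    have := ih (fun i => f i.succ) (fun i => S (i + 1)) h1 (fun i hi => h01 _ (by omega))
      (fun i => by rw [hf]; simp)
    simp only [good, e, Bool.and_eq_true, Bool.or_eq_true, beq_iff_eq]
    exact ⟨h2, this⟩

/-- Alternating condition for the values of `g` on the integer interval `[lo, hi)`. -/
def AltZ (lo hi : ℤ) (g : ℤ → ℤ) : Prop :=
  ∃ S : ℤ → ℤ, S lo = 0 ∧ S hi = 1 ∧ (∀ x, lo ≤ x → x ≤ hi → S x = 0 ∨ S x = 1) ∧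
    ∀ x, lo ≤ x → x < hi → g x = S (x + 1) - S x

theorem AltZ.altLine {n : ℕ} {lo hi : ℤ} {g : ℤ → ℤ} (h : AltZ lo hi g) (hn : hi = lo + n)
    (f : Fin n → ℤ) (hf : ∀ k : Fin n, f k = g ((k : ℕ) + lo)) : AltLine f := by
  obtain ⟨S, h0, h1, h01, hg⟩ := h
  apply altLine_of_good
  rw [← List.ofFn_eq_map]
  have := good_ofFn f (fun i => S (i + lo)) (by rw [← h1, hn, add_comm])
    (fun i hi => h01 _ (by omega) (by omega)) (fun i => by
      have hi := i.2
      rw [hf, hg _ (by omega) (by omega)]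
      congr 2; push_cast; ring)
  simpa [h0] using this

theorem AltZ.reflect {n : ℤ} {g g' : ℤ → ℤ} (h : AltZ 0 n g)
    (hg : ∀ x, 0 ≤ x → x < n → g' x = g (n - 1 - x)) : AltZ 0 n g' := by
  obtain ⟨S, h0, h1, h01, hS⟩ := h
  refine ⟨fun x => 1 - S (n - x), by simp [h1], by simp [h0], ?_, ?_⟩
  · intro x hx hx'
    rcases h01 (n - x) (by omega) (by omega) with h | h <;> simp [h]
  · intro x hx hx'
    rw [hg x hx hx', hS _ (by omega) (by omega)]
    have e1 : n - 1 - x + 1 = n - x := by ring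
    have e2 : n - (x + 1) = n - 1 - x := by ring
    simp only [e1, e2]; ring

def dl (p x : ℤ) : ℤ := if x = p then 1 else 0

def blk (l u x : ℤ) : ℤ := if l ≤ x ∧ x ≤ u then (if (x - l) % 2 = 0 then 1 else -1) else 0

/-- `+` at `p`, `-` at `q`, an alternating block on `[l,u]`, `-` at `r`, `+` at `s`
(the outer pairs are absent when `p = q`, resp. `r = s`). -/
def ln (p q l u r s x : ℤ) : ℤ := dl p x - dl q x + blk l u x - dl r x + dl s x

def LnOK (lo hi p q l u r s : ℤ) : Prop :=
  lo ≤ l ∧ l ≤ u ∧ u < hi ∧ (u - l) % 2 = 0 ∧ (p = q ∨ (lo ≤ p ∧ p < q ∧ q < l)) ∧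
    (r = s ∨ (u < r ∧ r < s ∧ s < hi))

theorem altZ_ln {lo hi p q l u r s : ℤ} {g : ℤ → ℤ} (h : LnOK lo hi p q l u r s)
    (hg : ∀ x, lo ≤ x → x < hi → g x = ln p q l u r s x) : AltZ lo hi g := by
  obtain ⟨h1, h2, h3, h4, h5, h6⟩ := h
  refine ⟨fun x => (if p < x ∧ x ≤ q then 1 else 0) + (if x ≤ l then 0 else if u < x then 1 else
    (x - l) % 2) - (if r < x ∧ x ≤ s then 1 else 0), ?_, ?_, ?_, ?_⟩
  · simp only []
    split_ifs <;> omega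
  · simp only []
    split_ifs <;> omega
  · intro x hx hx'
    simp only []
    split_ifs <;> omega
  · intro x hx hx'
    rw [hg x hx hx']
    have key : (if x ≤ l - 1 then (0 : ℤ) else if u < x + 1 then 1 else (x + 1 - l) % 2)
        - (if x ≤ l then 0 else if u < x then 1 else (x - l) % 2) = blk l u x := by
      unfold blk
      split_ifs <;> omega
    have key1 : (if p < x + 1 ∧ x + 1 ≤ q then (1 : ℤ) else 0) - (if p < x ∧ x ≤ q then 1 else 0)
        = dl p x - dl q x := by
      unfold dl
      split_ifs <;> omega
    have key2 : (if r < x + 1 ∧ x + 1 ≤ s then (1 : ℤ) else 0) - (if r < x ∧ x ≤ s then 1 else 0)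
        = dl r x - dl s x := by
      unfold dl
      split_ifs <;> omega
    have e : (x + 1 ≤ l) = (x ≤ l - 1) := by
      apply propext; constructor <;> intro h <;> omega
    simp only [ln, e]
    linarith

theorem sum_dl {n : ℕ} (lo p : ℤ) (h : lo ≤ p) (h' : p < lo + n) :
    ∑ k : Fin n, ((k : ℕ) + lo : ℤ) * dl p ((k : ℕ) + lo) = p := by
  rw [Finset.sum_eq_single (⟨(p - lo).toNat, by omega⟩ : Fin n)]
  · have : (((p - lo).toNat : ℕ) : ℤ) = p - lo := Int.toNat_of_nonneg (by omega)
    simp [this, dl]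
  · intro b _ hb
    have : ((b : ℕ) : ℤ) + lo ≠ p := by
      intro h
      apply hb
      ext
      simp only []
      omega
    simp [dl, this]
  · simp

theorem sum_blk {n : ℕ} (lo l : ℤ) (d : ℕ) (h : lo ≤ l) (h' : l + 2 * d < lo + n) :
    ∑ k : Fin n, ((k : ℕ) + lo : ℤ) * blk l (l + 2 * d) ((k : ℕ) + lo) = l + d := by
  induction d with
  | zero =>
    rw [← sum_dl (n := n) lo l h (by simpa using h')]
    simp only [Nat.cast_zero, mul_zero, add_zero, sum_dl lo l h (by simpa using h')]
    rw [← sum_dl (n := n) lo l h (by simpa using h')]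
    apply Finset.sum_congr rfl
    intro k _
    congr 1
    rw [sum_dl lo l h (by simpa using h')]
    unfold blk dl
    split_ifs <;> omega
  | succ d ih =>
    push_cast at h' ⊢
    have ih := ih (by omega)
    have h1 := sum_dl (n := n) lo (l + 2 * d + 1) (by omega) (by omega)
    have h2 := sum_dl (n := n) lo (l + 2 * d + 2) (by omega) (by omega)
    have e : ∀ x : ℤ, x * blk l (l + 2 * (d + 1)) x =
        x * blk l (l + 2 * d) x - x * dl (l + 2 * d + 1) x + x * dl (l + 2 * d + 2) x := by
      intro x
      rw [← mul_sub, ← mul_add]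
      congr 1
      unfold blk dl
      split_ifs <;> omega
    simp only [e, Finset.sum_add_distrib, Finset.sum_sub_distrib]
    rw [ih, h1, h2]; ring

theorem sum_ln {n : ℕ} {lo hi p q l u r s : ℤ} (hn : hi = lo + n) (h : LnOK lo hi p q l u r s) :
    2 * ∑ k : Fin n, ((k : ℕ) + lo : ℤ) * ln p q l u r s ((k : ℕ) + lo) =
      2 * (p - q) + (l + u) + 2 * (s - r) := by
  obtain ⟨h1, h2, h3, h4, h5, h6⟩ := h
  obtain ⟨d, hd⟩ : ∃ d : ℕ, u = l + 2 * d := ⟨((u - l) / 2).toNat, by omega⟩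
  have hb := sum_blk (n := n) lo l d h1 (by omega)
  rw [← hd] at hb
  have e : ∀ x : ℤ, x * ln p q l u r s x =
      (x * dl p x - x * dl q x) + x * blk l u x + (x * dl s x - x * dl r x) := by
    intro x; unfold ln; ring
  have hpq : ∑ k : Fin n, (((k : ℕ) + lo : ℤ) * dl p ((k : ℕ) + lo) -
      ((k : ℕ) + lo : ℤ) * dl q ((k : ℕ) + lo)) = p - q := by
    rcases h5 with h5 | h5
    · subst h5; simp
    · rw [Finset.sum_sub_distrib, sum_dl _ _ (by omega) (by omega),
        sum_dl _ _ (by omega) (by omega)]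
  have hrs : ∑ k : Fin n, (((k : ℕ) + lo : ℤ) * dl s ((k : ℕ) + lo) -
      ((k : ℕ) + lo : ℤ) * dl r ((k : ℕ) + lo)) = s - r := by
    rcases h6 with h6 | h6
    · subst h6; simp
    · rw [Finset.sum_sub_distrib, sum_dl _ _ (by omega) (by omega),
        sum_dl _ _ (by omega) (by omega)]
  simp only [e, Finset.sum_add_distrib]
  rw [hpq, hrs, hb]
  rw [hd]; ring

theorem AltZ.sum {n : ℕ} {lo hi : ℤ} {g : ℤ → ℤ} (h : AltZ lo hi g) (hn : hi = lo + n) :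
    ∑ k : Fin n, g ((k : ℕ) + lo) = 1 := by
  obtain ⟨S, h0, h1, h01, hg⟩ := h
  have e : ∀ k : Fin n, g ((k : ℕ) + lo) =
      (fun k : ℕ => S ((k + 1 : ℕ) + lo) - S (k + lo)) (k : ℕ) := by
    intro k
    have hk := k.2
    simp only []
    rw [hg _ (by omega) (by omega)]
    congr 2
    push_cast; ring
  rw [Finset.sum_congr rfl (fun k _ => e k),
    Fin.sum_univ_eq_sum_range (fun k : ℕ => S ((k + 1 : ℕ) + lo) - S (k + lo)),
    Finset.sum_range_sub (fun k : ℕ => S (k + lo))]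
  simp only [Nat.cast_zero, zero_add, h0]
  rw [add_comm, ← hn, h1]; rfl

theorem card_interval {n : ℕ} (lo hi : ℤ) (h0 : 0 ≤ lo) (h1 : lo ≤ hi + 1) (h2 : hi < n) :
    (Finset.univ.filter (fun j : Fin n => lo ≤ (j : ℕ) ∧ ((j : ℕ) : ℤ) ≤ hi)).card =
      (hi + 1 - lo).toNat := by
  have e : (Finset.univ.filter (fun j : Fin n => lo ≤ (j : ℕ) ∧ ((j : ℕ) : ℤ) ≤ hi)).card =
      (Finset.Ico lo.toNat (hi + 1).toNat).card := by
    refine Finset.card_bij (fun (j : Fin n) _ => (j : ℕ)) ?_ ?_ ?_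
    · intro a ha
      simp only [Finset.mem_filter, Finset.mem_univ, true_and] at ha
      simp only [Finset.mem_Ico]
      omega
    · intro a _ b _ h
      exact Fin.ext h
    · intro b hb
      simp only [Finset.mem_Ico] at hb
      refine ⟨⟨b, by omega⟩, ?_, rfl⟩
      simp only [Finset.mem_filter, Finset.mem_univ, true_and]
      omega
  rw [e, Nat.card_Ico]
  omega

theorem assemble (n : ℕ) (t0 : ℤ) (G : ℤ → ℤ → ℤ → ℤ) (lo hi : ℤ → ℤ)
    (hrow : ∀ i t : ℤ, 0 ≤ i → i < n → t0 ≤ t → t < t0 + n → AltZ 0 n (fun j => G i j t))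
    (hsym : ∀ i j t : ℤ, 0 ≤ i → i < n → 0 ≤ j → j < n → G i j t = G j i t)
    (hver : ∀ i j : ℤ, 0 ≤ i → i < n → 0 ≤ j → j < n → ∃ p q l u r s, LnOK t0 (t0 + n) p q l u r s ∧
      (∀ t, t0 ≤ t → t < t0 + n → G i j t = ln p q l u r s t) ∧
      (2 * (p - q) + (l + u) + 2 * (s - r) = 0 ↔ lo i ≤ j ∧ j ≤ hi i))
    (hlo : ∀ i : ℤ, 0 ≤ i → i < n → 0 ≤ lo i ∧ lo i ≤ hi i + 1 ∧ hi i < n) :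
    ∃ A : Fin n → Fin n → Fin n → ℤ, IsASHM A ∧
      (Finset.univ.filter (fun p : Fin n × Fin n => ashl A p.1 p.2 = 1 - t0)).card =
        ∑ i ∈ Finset.range n, (hi i + 1 - lo i).toNat := by
  refine ⟨fun i j k => G (i : ℕ) (j : ℕ) ((k : ℕ) + t0), ⟨?_, ?_, ?_⟩, ?_⟩
  · intro j k
    have hj := j.2
    have hk := k.2
    refine (hrow (j : ℕ) ((k : ℕ) + t0) (by omega) (by omega) (by omega) (by omega)).altLine
      (by simp) _ ?_
    intro i
    have := i.2
    rw [add_zero]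
    exact hsym _ _ _ (by omega) (by omega) (by omega) (by omega)
  · intro j k
    have hj := j.2
    have hk := k.2
    refine (hrow (j : ℕ) ((k : ℕ) + t0) (by omega) (by omega) (by omega) (by omega)).altLine
      (by simp) _ ?_
    intro i
    simp
  · intro i j
    obtain ⟨p, q, l, u, r, s, h1, h2, h3⟩ := hver (i : ℕ) (j : ℕ) (by omega) (by omega)
      (by omega) (by omega)
    exact (altZ_ln h1 h2).altLine rfl _ (fun k => rfl)
  · rw [Finset.card_filter, Fintype.sum_prod_type,
      ← Fin.sum_univ_eq_sum_range (fun i : ℕ => (hi i + 1 - lo i).toNat)]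
    apply Finset.sum_congr rfl
    intro i _
    rw [← Finset.card_filter]
    have hi2 := i.2
    obtain ⟨ha, hb, hc⟩ := hlo (i : ℕ) (by omega) (by omega)
    rw [← card_interval (n := n) _ _ ha hb hc]
    congr 1
    apply Finset.filter_congr
    intro j _
    obtain ⟨p, q, l, u, r, s, h1, h2, h3⟩ := hver (i : ℕ) (j : ℕ) (by omega) (by omega)
      (by omega) (by omega)
    rw [← h3, ← sum_ln rfl h1]
    have hs := (altZ_ln h1 h2).sum rfl
    have e : ashl (fun i j k : Fin n => G (i : ℕ) (j : ℕ) ((k : ℕ) + t0)) i j =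
        ∑ k : Fin n, ((k : ℕ) + t0 : ℤ) * ln p q l u r s ((k : ℕ) + t0) + (1 - t0) := by
      have e0 : (1 - t0) = ∑ k : Fin n, (1 - t0) * G (i : ℕ) (j : ℕ) ((k : ℕ) + t0) := by
        rw [← Finset.mul_sum, hs, mul_one]
      rw [e0, ← Finset.sum_add_distrib]
      unfold ashl
      apply Finset.sum_congr rfl
      intro k _
      have := k.2
      rw [← h2 _ (by omega) (by omega)]
      ring
    rw [e]
    constructor <;> intro h <;> omega

/-! ### Odd case -/

def oc (c a b t : ℤ) : ℤ :=
  if a + b = c - 1 ∧ 1 ≤ a ∧ 1 ≤ b then ln (1 - c) 1 c c 0 0 t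
  else if a + b = 0 then dl (1 - c) t
  else if a + b = c - 2 then dl 1 t
  else if a + b = c - 1 then dl (-c) t
  else dl (a + b + 1) t

def HH (c i j t : ℤ) : ℤ :=
  if i + j ≤ c - 1 then oc c i j t
  else if 3 * c + 1 ≤ i + j then oc c (2 * c - i) (2 * c - j) t
  else if c + 1 ≤ j - i then oc c i (2 * c - j) (-t)
  else if c + 1 ≤ i - j then oc c (2 * c - i) j (-t)
  else blk (-(c - |i - c| - |j - c|)) (c - |i - c| - |j - c|) t

theorem blk_single (v t : ℤ) : ln 0 0 v v 0 0 t = dl v t := by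
  unfold ln blk dl
  split_ifs <;> omega

theorem ln_blk (l u t : ℤ) : ln 0 0 l u 0 0 t = blk l u t := by
  unfold ln
  ring

theorem oc_comm (c a b t : ℤ) : oc c a b t = oc c b a t := by
  unfold oc
  rw [add_comm a b]
  congr 1
  apply propext
  constructor <;> intro h <;> omega

theorem HH_comm {c : ℤ} (hc : 3 ≤ c) (i j t : ℤ) (hi : 0 ≤ i) (hi' : i < 2 * c + 1) (hj : 0 ≤ j)
    (hj' : j < 2 * c + 1) : HH c i j t = HH c j i t := by
  unfold HH
  rw [oc_comm c j i, oc_comm c (2 * c - j) (2 * c - i), oc_comm c (2 * c - j) i,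
    oc_comm c j (2 * c - i), add_comm j i,
    show c - |j - c| - |i - c| = c - |i - c| - |j - c| by ring]
  split_ifs <;> first | rfl | omega

theorem HH_rot {c : ℤ} (hc : 3 ≤ c) (i j t : ℤ) (hi : 0 ≤ i) (hi' : i < 2 * c + 1) (hj : 0 ≤ j)
    (hj' : j < 2 * c + 1) : HH c (2 * c - i) (2 * c - j) t = HH c i j t := by
  unfold HH
  rw [show 2 * c - i - c = - (i - c) by ring, show 2 * c - j - c = - (j - c) by ring, abs_neg,
    abs_neg, sub_sub_cancel, sub_sub_cancel]
  split_ifs <;> first | rfl | omega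

theorem blk_neg (d t : ℤ) : blk (-d) d (-t) = blk (-d) d t := by
  unfold blk
  split_ifs <;> omega

theorem HH_flip {c : ℤ} (hc : 3 ≤ c) (i j t : ℤ) (hi : 0 ≤ i) (hi' : i < 2 * c + 1) (hj : 0 ≤ j)
    (hj' : j < 2 * c + 1) : HH c i (2 * c - j) (-t) = HH c i j t := by
  unfold HH
  rw [show 2 * c - j - c = - (j - c) by ring, abs_neg, sub_sub_cancel, neg_neg, blk_neg]
  split_ifs <;> first | rfl | omega

theorem HH_row {c i t : ℤ} (hc : 3 ≤ c) (hi : 0 ≤ i) (hi' : i ≤ c)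
    (p q l u r s : ℤ) (hok : LnOK 0 (2 * c + 1) p q l u r s)
    (h1 : ∀ j, 0 ≤ j → j ≤ c - 1 - i → oc c i j t = ln p q l u r s j)
    (h2 : ∀ b, 0 ≤ b → b ≤ c - 1 - i → oc c i b (-t) = ln p q l u r s (2 * c - b))
    (h3 : ∀ j, c - i ≤ j → j ≤ c + i → blk (-(i - |j - c|)) (i - |j - c|) t = ln p q l u r s j) :
    AltZ 0 (2 * c + 1) (fun j => HH c i j t) := by
  apply altZ_ln hok
  intro j hj hj'
  simp only [HH]
  rw [show c - |i - c| - |j - c| = i - |j - c| by rw [abs_of_nonpos (by omega)]; ring]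
  split_ifs
  · exact h1 j hj (by omega)
  · omega
  · rw [h2 _ (by omega) (by omega), sub_sub_cancel]
  · omega
  · exact h3 j (by omega) (by omega)

theorem oc_0 {c a b : ℤ} (hc : 3 ≤ c) (ha : 0 ≤ a) (hb : 0 ≤ b) (h : a + b ≤ c - 1) :
    oc c a b 0 = 0 := by
  unfold oc ln blk dl
  split_ifs <;> omega

theorem oc_1 {c a b : ℤ} (hc : 3 ≤ c) (ha : 0 ≤ a) (hb : 0 ≤ b) (h : a + b ≤ c - 1) :
    oc c a b 1 = if a + b = c - 2 then 1 else if a + b = c - 1 ∧ 1 ≤ a ∧ 1 ≤ b then -1 else 0 := by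
  unfold oc ln blk dl
  split_ifs <;> omega

theorem oc_mid {c a b t : ℤ} (hc : 3 ≤ c) (ha : 0 ≤ a) (hb : 0 ≤ b) (h : a + b ≤ c - 1)
    (ht : 2 ≤ t) (ht' : t ≤ c - 2) :
    oc c a b t = if a + b = t - 1 then 1 else 0 := by
  unfold oc ln blk dl
  split_ifs <;> omega

theorem oc_c1 {c a b : ℤ} (hc : 3 ≤ c) (ha : 0 ≤ a) (hb : 0 ≤ b) (h : a + b ≤ c - 1) :
    oc c a b (c - 1) = 0 := by
  unfold oc ln blk dl
  split_ifs <;> omega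

theorem oc_c {c a b : ℤ} (hc : 3 ≤ c) (ha : 0 ≤ a) (hb : 0 ≤ b) (h : a + b ≤ c - 1) :
    oc c a b c = if a + b = c - 1 ∧ 1 ≤ a ∧ 1 ≤ b then 1 else 0 := by
  unfold oc ln blk dl
  split_ifs <;> omega

theorem oc_neg {c a b t : ℤ} (hc : 3 ≤ c) (ha : 0 ≤ a) (hb : 0 ≤ b) (h : a + b ≤ c - 1)
    (ht : 0 ≤ t) (ht' : t ≤ c - 2) : oc c a b (-t) = 0 := by
  unfold oc ln blk dl
  split_ifs <;> omega

theorem oc_nc1 {c a b : ℤ} (hc : 3 ≤ c) (ha : 0 ≤ a) (hb : 0 ≤ b) (h : a + b ≤ c - 1) :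
    oc c a b (-(c - 1)) = if a + b = 0 ∨ (a + b = c - 1 ∧ 1 ≤ a ∧ 1 ≤ b) then 1 else 0 := by
  unfold oc ln blk dl
  split_ifs <;> omega

theorem oc_nc {c a b : ℤ} (hc : 3 ≤ c) (ha : 0 ≤ a) (hb : 0 ≤ b) (h : a + b ≤ c - 1) :
    oc c a b (-c) = if a + b = c - 1 ∧ (a = 0 ∨ b = 0) then 1 else 0 := by
  unfold oc ln blk dl
  split_ifs <;> omega

theorem blk_D {c i j t : ℤ} (ht : 0 ≤ t) :
    blk (-(i - |j - c|)) (i - |j - c|) t = blk (c - (i - t)) (c + (i - t)) j := by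
  unfold blk
  rcases abs_cases (j - c) with ⟨h, h'⟩ | ⟨h, h'⟩ <;> rw [h] <;> split_ifs <;> omega

theorem HH_top {c i t : ℤ} (hc : 3 ≤ c) (hi : 0 ≤ i) (hi' : i ≤ c) (ht : 0 ≤ t) (ht' : t ≤ c) :
    AltZ 0 (2 * c + 1) (fun j => HH c i j t) := by
  have hcase : t = 0 ∨ t = 1 ∨ (2 ≤ t ∧ t ≤ c - 2) ∨ t = c - 1 ∨ t = c := by omega
  rcases hcase with rfl | rfl | ⟨h1, h2⟩ | rfl | rfl
  · apply HH_row hc hi hi' 0 0 (c - i) (c + i) 0 0 (by unfold LnOK; omega)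
    · intro j hj hj'
      rw [oc_0 hc hi hj (by omega), ln_blk, blk]
      split_ifs <;> omega
    · intro j hj hj'
      rw [neg_zero, oc_0 hc hi hj (by omega), ln_blk, blk]
      split_ifs <;> omega
    · intro j hj hj'
      rw [blk_D ht, ln_blk, sub_zero]
  · rcases (by omega : i = 0 ∨ (1 ≤ i ∧ i ≤ c - 2) ∨ c - 1 ≤ i) with h | h | h
    · apply HH_row hc hi hi' 0 0 (c - 2) (c - 2) 0 0 (by unfold LnOK; omega)
      · intro j hj hj'
        rw [oc_1 hc hi hj (by omega), blk_single, dl]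
        split_ifs <;> omega
      · intro j hj hj'
        rw [oc_neg hc hi hj (by omega) (by omega) (by omega), blk_single, dl]
        split_ifs <;> omega
      · intro j hj hj'
        rw [blk_D ht, blk_single, blk, dl]
        split_ifs <;> omega
    · apply HH_row hc hi hi' (c - 2 - i) (c - 1 - i) (c - (i - 1)) (c + (i - 1)) 0 0
        (by unfold LnOK; omega)
      · intro j hj hj'
        rw [oc_1 hc hi hj (by omega), ln, blk, dl, dl]
        split_ifs <;> omega
      · intro j hj hj'
        rw [oc_neg hc hi hj (by omega) (by omega) (by omega), ln, blk, dl, dl]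
        split_ifs <;> omega
      · intro j hj hj'
        rw [blk_D ht, ln, dl, dl]
        split_ifs <;> omega
    · apply HH_row hc hi hi' 0 0 (c - (i - 1)) (c + (i - 1)) 0 0 (by unfold LnOK; omega)
      · intro j hj hj'
        rw [oc_1 hc hi hj (by omega), ln_blk, blk]
        split_ifs <;> omega
      · intro j hj hj'
        rw [oc_neg hc hi hj (by omega) (by omega) (by omega), ln_blk, blk]
        split_ifs <;> omega
      · intro j hj hj'
        rw [blk_D ht, ln_blk]
  · rcases lt_or_ge i t with h | h
    · apply HH_row hc hi hi' 0 0 (t - 1 - i) (t - 1 - i) 0 0 (by unfold LnOK; omega)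
      · intro j hj hj'
        rw [oc_mid hc hi hj (by omega) h1 h2, blk_single, dl]
        split_ifs <;> omega
      · intro j hj hj'
        rw [oc_neg hc hi hj (by omega) (by omega) (by omega), blk_single, dl]
        split_ifs <;> omega
      · intro j hj hj'
        rw [blk_D ht, blk_single, blk, dl]
        split_ifs <;> omega
    · apply HH_row hc hi hi' 0 0 (c - (i - t)) (c + (i - t)) 0 0 (by unfold LnOK; omega)
      · intro j hj hj'
        rw [oc_mid hc hi hj (by omega) h1 h2, ln_blk, blk]
        split_ifs <;> omega
      · intro j hj hj'
        rw [oc_neg hc hi hj (by omega) (by omega) (by omega), ln_blk, blk]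
        split_ifs <;> omega
      · intro j hj hj'
        rw [blk_D ht, ln_blk]
  · rcases lt_or_ge i (c - 1) with h | h
    · obtain ⟨y, hy⟩ : ∃ y, (i = 0 ∧ y = 2 * c) ∨ (1 ≤ i ∧ y = c + 1 + i) := by
        rcases (by omega : i = 0 ∨ 1 ≤ i) with h | h
        · exact ⟨2 * c, by omega⟩
        · exact ⟨c + 1 + i, by omega⟩
      apply HH_row hc hi hi' 0 0 y y 0 0 (by unfold LnOK; omega)
      · intro j hj hj'
        rw [oc_c1 hc hi hj (by omega), blk_single, dl]
        split_ifs <;> omega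
      · intro j hj hj'
        rw [oc_nc1 hc hi hj (by omega), blk_single, dl]
        split_ifs <;> omega
      · intro j hj hj'
        rw [blk_D ht, blk_single, blk, dl]
        split_ifs <;> omega
    · apply HH_row hc hi hi' 0 0 (c - (i - (c - 1))) (c + (i - (c - 1))) 0 0
        (by unfold LnOK; omega)
      · intro j hj hj'
        rw [oc_c1 hc hi hj (by omega), ln_blk, blk]
        split_ifs <;> omega
      · intro j hj hj'
        rw [oc_nc1 hc hi hj (by omega), ln_blk, blk]
        split_ifs <;> omega
      · intro j hj hj'
        rw [blk_D ht, ln_blk]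
  · obtain ⟨y, hy⟩ : ∃ y, (i = 0 ∧ y = t + 1) ∨ (1 ≤ i ∧ i ≤ t - 2 ∧ y = t - 1 - i) ∨
        (i = t - 1 ∧ y = 2 * t) ∨ (i = t ∧ y = t) := by
      rcases (by omega : i = 0 ∨ (1 ≤ i ∧ i ≤ t - 2) ∨ i = t - 1 ∨ i = t) with h | h | h | h
      · exact ⟨t + 1, by omega⟩
      · exact ⟨t - 1 - i, by omega⟩
      · exact ⟨2 * t, by omega⟩
      · exact ⟨t, by omega⟩
    apply HH_row hc hi hi' 0 0 y y 0 0 (by unfold LnOK; omega)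
    · intro j hj hj'
      rw [oc_c hc hi hj (by omega), blk_single, dl]
      split_ifs <;> omega
    · intro j hj hj'
      rw [oc_nc hc hi hj (by omega), blk_single, dl]
      split_ifs <;> omega
    · intro j hj hj'
      rw [blk_D ht, blk_single, blk, dl]
      split_ifs <;> omega

theorem HH_alt {c i t : ℤ} (hc : 3 ≤ c) (hi : 0 ≤ i) (hi' : i < 2 * c + 1) (ht : -c ≤ t)
    (ht' : t ≤ c) : AltZ 0 (2 * c + 1) (fun j => HH c i j t) := by
  have key : ∀ i t, 0 ≤ i → i ≤ c → -c ≤ t → t ≤ c →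
      AltZ 0 (2 * c + 1) (fun j => HH c i j t) := by
    intro i t hi hi' ht ht'
    rcases le_or_gt 0 t with h | h
    · exact HH_top hc hi hi' h ht'
    · apply (HH_top (t := -t) hc hi hi' (by omega) (by omega)).reflect
      intro x hx hx'
      rw [← HH_flip hc i x t hi (by omega) hx hx']
      congr 1; ring
  rcases le_or_gt i c with h | h
  · exact key i t hi h ht ht'
  · apply (key (2 * c - i) t (by omega) (by omega) ht ht').reflect
    intro x hx hx'
    rw [← HH_rot hc i x t hi (by omega) hx hx']
    congr 1; ring

def rlo (c i : ℤ) : ℤ := if i = 0 then c else if i ≤ c - 2 then c - 1 - i else c - i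
def rhi (c i : ℤ) : ℤ := if i = 0 then c else if i ≤ c - 2 then c + 1 + i else c + i

theorem oc_cell {c a b : ℤ} (hc : 3 ≤ c) (ha : 0 ≤ a) (hb : 0 ≤ b) (h : a + b ≤ c - 1) :
    ∃ p q l u r s, LnOK (-c) (c + 1) p q l u r s ∧ (∀ t, oc c a b t = ln p q l u r s t) ∧
      (2 * (p - q) + (l + u) + 2 * (s - r) = 0 ↔ a + b = c - 1 ∧ 1 ≤ a ∧ 1 ≤ b) := by
  by_cases h1 : a + b = c - 1 ∧ 1 ≤ a ∧ 1 ≤ b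
  · refine ⟨1 - c, 1, c, c, 0, 0, by unfold LnOK; omega, ?_, by omega⟩
    intro t
    simp only [oc, h1]
    simp
  · obtain ⟨v, hv, e⟩ : ∃ v, (v ≠ 0 ∧ -c ≤ v ∧ v ≤ c) ∧ ∀ t, oc c a b t = dl v t := by
      by_cases h2 : a + b = 0
      · exact ⟨1 - c, by omega, fun t => by simp only [oc, if_neg h1, if_pos h2]⟩
      by_cases h3 : a + b = c - 2
      · exact ⟨1, by omega, fun t => by simp only [oc, if_neg h1, if_neg h2, if_pos h3]⟩
      by_cases h4 : a + b = c - 1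
      · exact ⟨-c, by omega, fun t => by simp only [oc, if_neg h1, if_neg h2, if_neg h3, if_pos h4]⟩
      exact ⟨a + b + 1, by omega,
        fun t => by simp only [oc, if_neg h1, if_neg h2, if_neg h3, if_neg h4]⟩
    refine ⟨0, 0, v, v, 0, 0, by unfold LnOK; omega, ?_, by omega⟩
    intro t
    rw [e, blk_single]

theorem dl_neg (p t : ℤ) : dl p (-t) = dl (-p) t := by
  unfold dl
  split_ifs <;> omega

theorem ln_neg {lo hi p q l u r s : ℤ} (h : LnOK lo hi p q l u r s) (t : ℤ) :
    ln p q l u r s (-t) = ln (-s) (-r) (-u) (-l) (-q) (-p) t := by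
  have : blk l u (-t) = blk (-u) (-l) t := by
    obtain ⟨h1, h2, h3, h4, h5, h6⟩ := h
    unfold blk
    split_ifs <;> omega
  unfold ln
  rw [this]
  simp only [dl_neg]
  ring

theorem HH_cell {c i j : ℤ} (hc : 3 ≤ c) (hi : 0 ≤ i) (hi' : i ≤ c) (hj : 0 ≤ j)
    (hj' : j < 2 * c + 1) :
    ∃ p q l u r s, LnOK (-c) (c + 1) p q l u r s ∧ (∀ t, HH c i j t = ln p q l u r s t) ∧
      (2 * (p - q) + (l + u) + 2 * (s - r) = 0 ↔ rlo c i ≤ j ∧ j ≤ rhi c i) := by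
  rcases (by omega : i + j ≤ c - 1 ∨ c + 1 ≤ j - i ∨ (c - i ≤ j ∧ j ≤ c + i)) with h | h | h
  · obtain ⟨p, q, l, u, r, s, h1, h2, h3⟩ := oc_cell hc hi hj h
    refine ⟨p, q, l, u, r, s, h1, ?_, ?_⟩
    · intro t
      rw [← h2, HH, if_pos h]
    · rw [h3]
      unfold rlo rhi
      split_ifs <;> omega
  · obtain ⟨p, q, l, u, r, s, h1, h2, h3⟩ := oc_cell (b := 2 * c - j) hc hi (by omega) (by omega)
    refine ⟨-s, -r, -u, -l, -q, -p, ?_, ?_, ?_⟩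
    · unfold LnOK at h1 ⊢
      omega
    · intro t
      rw [← ln_neg h1, ← h2, HH, if_neg (by omega), if_neg (by omega), if_pos h]
    · rw [show 2 * (-s - -r) + (-u + -l) + 2 * (-p - -q) = 0 ↔
        2 * (p - q) + (l + u) + 2 * (s - r) = 0 by constructor <;> intro h <;> omega, h3]
      unfold rlo rhi
      split_ifs <;> omega
  · have hd : c - |i - c| - |j - c| = i - |j - c| := by rw [abs_of_nonpos (by omega)]; ring
    have hd2 : |j - c| ≤ i := by rw [abs_le]; omega
    have hd3 := abs_nonneg (j - c)
    refine ⟨0, 0, -(i - |j - c|), i - |j - c|, 0, 0, by unfold LnOK; omega, ?_, ?_⟩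
    · intro t
      rw [HH, if_neg (by omega), if_neg (by omega), if_neg (by omega), if_neg (by omega), hd,
        ln_blk]
    · unfold rlo rhi
      split_ifs <;> omega

theorem odd_sum (c : ℕ) (hc : 3 ≤ c) (lo hi : ℤ → ℤ)
    (h1 : ∀ i : ℤ, i ≤ c → lo i = rlo c i ∧ hi i = rhi c i)
    (h2 : ∀ i : ℤ, c < i → lo i = 2 * c - rhi c (2 * c - i) ∧ hi i = 2 * c - rlo c (2 * c - i)) :
    ∑ i ∈ Finset.range (2 * c + 1), (hi i + 1 - lo i).toNat = 2 * c ^ 2 + 6 * c - 7 := by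
  obtain ⟨d, rfl⟩ : ∃ d, c = d + 3 := ⟨c - 3, by omega⟩
  have hA : ∀ k, k ≤ d + 1 → ∑ i ∈ Finset.range k, (hi ((i : ℕ) + 1 : ℕ) + 1 - lo ((i : ℕ) + 1 : ℕ)).toNat
      = k ^ 2 + 4 * k := by
    intro k hk
    induction k with
    | zero => simp
    | succ k ih =>
      rw [Finset.sum_range_succ, ih (by omega)]
      obtain ⟨e1, e2⟩ := h1 ((k + 1 : ℕ) : ℤ) (by omega)
      have : (hi ((k + 1 : ℕ) : ℤ) + 1 - lo ((k + 1 : ℕ) : ℤ)).toNat = 2 * k + 5 := by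
        rw [e1, e2]
        unfold rlo rhi
        split_ifs <;> omega
      rw [this]; ring
  have hhalf : ∑ i ∈ Finset.range (d + 3), (hi i + 1 - lo i).toNat =
      1 + ((d + 1) ^ 2 + 4 * (d + 1)) + (2 * d + 5) := by
    rw [Finset.sum_range_succ, Finset.sum_range_succ', hA _ le_rfl]
    obtain ⟨e1, e2⟩ := h1 ((0 : ℕ) : ℤ) (by omega)
    obtain ⟨e3, e4⟩ := h1 ((d + 2 : ℕ) : ℤ) (by omega)
    rw [e1, e2, e3, e4]
    unfold rlo rhi
    rw [if_pos (by simp), if_pos (by simp), if_neg (by omega), if_neg (by omega), if_neg (by omega),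
      if_neg (by omega)]
    omega
  rw [show 2 * (d + 3) + 1 = (d + 3 + 1) + (d + 3) by ring, Finset.sum_range_add,
    Finset.sum_range_succ, hhalf, ← Finset.sum_range_reflect]
  have e : ∑ j ∈ Finset.range (d + 3), (hi ((d + 3 + 1 + (d + 3 - 1 - j) : ℕ) : ℤ) + 1 -
      lo ((d + 3 + 1 + (d + 3 - 1 - j) : ℕ) : ℤ)).toNat =
      ∑ i ∈ Finset.range (d + 3), (hi i + 1 - lo i).toNat := by
    apply Finset.sum_congr rfl
    intro j hj
    have hj := Finset.mem_range.1 hj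
    obtain ⟨e1, e2⟩ := h2 ((d + 3 + 1 + (d + 3 - 1 - j) : ℕ) : ℤ) (by omega)
    obtain ⟨e3, e4⟩ := h1 (j : ℤ) (by omega)
    rw [e1, e2, e3, e4, show 2 * ((d + 3 : ℕ) : ℤ) - ((d + 3 + 1 + (d + 3 - 1 - j) : ℕ) : ℤ) = j by
      omega]
    omega
  rw [e, hhalf]
  obtain ⟨e1, e2⟩ := h1 ((d + 3 : ℕ) : ℤ) (by omega)
  rw [e1, e2]
  unfold rlo rhi
  rw [if_neg (by omega), if_neg (by omega), if_neg (by omega), if_neg (by omega)]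
  have : (((d + 3 : ℕ) : ℤ) + ((d + 3 : ℕ) : ℤ) + 1 - (((d + 3 : ℕ) : ℤ) - ((d + 3 : ℕ) : ℤ))).toNat
    = 2 * d + 7 := by omega
  rw [this]
  symm
  apply Nat.sub_eq_of_eq_add
  ring

theorem odd_case (c : ℕ) (hc : 3 ≤ c) :
    ∃ A : Fin (2 * c + 1) → Fin (2 * c + 1) → Fin (2 * c + 1) → ℤ, IsASHM A ∧
      (Finset.univ.filter (fun p : Fin (2 * c + 1) × Fin (2 * c + 1) =>
        ashl A p.1 p.2 = 1 - -(c : ℤ))).card = 2 * c ^ 2 + 6 * c - 7 := by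
  have hc' : (3 : ℤ) ≤ c := by omega
  have hn : ((2 * c + 1 : ℕ) : ℤ) = 2 * (c : ℤ) + 1 := by push_cast; ring
  have hn2 : -(c : ℤ) + ((2 * c + 1 : ℕ) : ℤ) = c + 1 := by push_cast; ring
  rw [← odd_sum c hc (fun i => if i ≤ c then rlo c i else 2 * c - rhi c (2 * c - i))
    (fun i => if i ≤ c then rhi c i else 2 * c - rlo c (2 * c - i))
    (fun i hi => by simp only [if_pos hi, and_self])
    (fun i hi => by simp only [if_neg (not_le.2 hi), and_self])]
  refine assemble (2 * c + 1) (-(c : ℤ)) (HH c)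
    (fun i => if i ≤ c then rlo c i else 2 * c - rhi c (2 * c - i))
    (fun i => if i ≤ c then rhi c i else 2 * c - rlo c (2 * c - i)) ?_ ?_ ?_ ?_
  · intro i t h1 h2 h3 h4
    rw [hn]
    exact HH_alt hc' h1 (by omega) h3 (by omega)
  · intro i j t h1 h2 h3 h4
    exact HH_comm hc' i j t h1 (by omega) h3 (by omega)
  · intro i j h1 h2 h3 h4
    rw [hn2]
    rcases le_or_gt i c with h | h
    · simp only [if_pos h]
      obtain ⟨p, q, l, u, r, s, g1, g2, g3⟩ := HH_cell hc' h1 h h3 (by omega)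
      exact ⟨p, q, l, u, r, s, g1, fun t _ _ => g2 t, g3⟩
    · simp only [if_neg (not_le.2 h)]
      obtain ⟨p, q, l, u, r, s, g1, g2, g3⟩ := HH_cell (i := 2 * c - i) (j := 2 * c - j) hc'
        (by omega) (by omega) (by omega) (by omega)
      refine ⟨p, q, l, u, r, s, g1, fun t _ _ => ?_, ?_⟩
      · rw [← g2, HH_rot hc' i j t h1 (by omega) h3 (by omega)]
      · rw [g3]
        constructor <;> intro h <;> omega
  · intro i h1 h2
    rcases le_or_gt i c with h | h
    · simp only [if_pos h]
      unfold rlo rhi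
      split_ifs <;> omega
    · simp only [if_neg (not_le.2 h)]
      unfold rlo rhi
      split_ifs <;> omega

/-! ### Even case -/

def smc (m a b t : ℤ) : ℤ :=
  if a + b = m - 2 ∧ 1 ≤ a ∧ 1 ≤ b then ln (3 - m) 2 (m - 1) (m - 1) 0 0 t
  else if a = 1 ∧ b = 1 then ln (-3) (-1) 3 3 0 0 t
  else if a + b = 0 then dl (3 - m) t
  else if a + b = 1 then dl (-1) t
  else if a + b = m - 4 then dl (2 - m) t
  else if a + b = m - 3 then dl 2 t
  else if a + b = m - 2 then dl (m - 1) t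
  else dl (-(a + b + 1)) t

def bgc (m a b t : ℤ) : ℤ :=
  if a + b = m - 1 ∧ 1 ≤ a ∧ 1 ≤ b then ln (1 - m) 1 m m 0 0 t
  else if a = 1 ∧ b = 1 then dl 2 t
  else if a + b = 0 then dl (1 - m) t
  else if a + b = 1 then dl (-2) t
  else if a + b = m - 4 then dl (m - 2) t
  else if a + b = m - 3 then dl (m - 3) t
  else if a + b = m - 2 then dl 1 t
  else if a + b = m - 1 then dl m t
  else dl (a + b + 1) t

def dmc (m e f t : ℤ) : ℤ :=
  if f = 3 ∧ e ≤ 3 then ln (2 - m) (4 - m) (5 - m) (m - 5) (m - 4) (m - 2) t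
  else if f = 2 ∧ e ≤ 2 then blk (4 - m) (m - 4) t
  else blk (-(m - max e f)) (m - max e f) t

def GG (m i j t : ℤ) : ℤ :=
  if i + j ≤ m - 2 then smc m i j t
  else if 3 * m ≤ i + j then smc m (2 * m - 1 - i) (2 * m - 1 - j) t
  else if m ≤ j - i then bgc m i (2 * m - 1 - j) t
  else if m ≤ i - j then bgc m (2 * m - 1 - i) j t
  else dmc m (|j - i| + 1) |i + j + 1 - 2 * m| t

theorem ln_three (p q v t : ℤ) : ln p q v v 0 0 t = dl p t - dl q t + dl v t := by
  have h := blk_single v t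
  unfold ln at h ⊢
  linarith

theorem smc_cases {m a b : ℤ} (hm : 7 ≤ m) (ha : 0 ≤ a) (hb : 0 ≤ b) (h : a + b ≤ m - 2) :
    ((a + b = m - 2 ∧ 1 ≤ a ∧ 1 ≤ b) ∧ ∀ t, smc m a b t = dl (3 - m) t - dl 2 t + dl (m - 1) t) ∨
    (∃ v, (¬(a + b = m - 2 ∧ 1 ≤ a ∧ 1 ≤ b) ∧ ¬(a = 1 ∧ b = 1) ∧ (
      (a + b = 0 ∧ v = 3 - m) ∨ (a + b = 1 ∧ v = -1) ∨ (a + b = m - 4 ∧ v = 2 - m) ∨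
      (a + b = m - 3 ∧ v = 2) ∨ (a + b = m - 2 ∧ v = m - 1) ∨ (2 ≤ a + b ∧ a + b ≤ m - 5 ∧ v = -(a + b + 1)))) ∧
      ∀ t, smc m a b t = dl v t) ∨
    ((a = 1 ∧ b = 1) ∧ ∀ t, smc m a b t = dl (-3) t - dl (-1) t + dl 3 t) := by
  by_cases h1 : a + b = m - 2 ∧ 1 ≤ a ∧ 1 ≤ b
  · exact Or.inl ⟨h1, fun t => by rw [smc, if_pos h1, ln_three]⟩
  right
  by_cases h2 : a = 1 ∧ b = 1
  · exact Or.inr ⟨h2, fun t => by rw [smc, if_neg h1, if_pos h2, ln_three]⟩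
  left
  unfold smc
  simp only [if_neg h1, if_neg h2]
  split_ifs
  · exact ⟨_, by omega, fun t => rfl⟩
  · exact ⟨_, by omega, fun t => rfl⟩
  · exact ⟨_, by omega, fun t => rfl⟩
  · exact ⟨_, by omega, fun t => rfl⟩
  · exact ⟨_, by omega, fun t => rfl⟩
  · exact ⟨_, by omega, fun t => rfl⟩

theorem bgc_cases {m a b : ℤ} (hm : 7 ≤ m) (ha : 0 ≤ a) (hb : 0 ≤ b) (h : a + b ≤ m - 1) :
    ((a + b = m - 1 ∧ 1 ≤ a ∧ 1 ≤ b) ∧ ∀ t, bgc m a b t = dl (1 - m) t - dl 1 t + dl m t) ∨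
    (∃ v, (¬(a + b = m - 1 ∧ 1 ≤ a ∧ 1 ≤ b) ∧ (
      ((a = 1 ∧ b = 1) ∧ v = 2) ∨ (a + b = 0 ∧ v = 1 - m) ∨ (a + b = 1 ∧ v = -2) ∨
      (a + b = m - 4 ∧ v = m - 2) ∨ (a + b = m - 3 ∧ v = m - 3) ∨ (a + b = m - 2 ∧ v = 1) ∨
      (a + b = m - 1 ∧ v = m) ∨ (¬(a = 1 ∧ b = 1) ∧ 2 ≤ a + b ∧ a + b ≤ m - 5 ∧ v = a + b + 1))) ∧
      ∀ t, bgc m a b t = dl v t) := by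
  by_cases h1 : a + b = m - 1 ∧ 1 ≤ a ∧ 1 ≤ b
  · exact Or.inl ⟨h1, fun t => by rw [bgc, if_pos h1, ln_three]⟩
  right
  unfold bgc
  simp only [if_neg h1]
  split_ifs
  · exact ⟨_, by omega, fun t => rfl⟩
  · exact ⟨_, by omega, fun t => rfl⟩
  · exact ⟨_, by omega, fun t => rfl⟩
  · exact ⟨_, by omega, fun t => rfl⟩
  · exact ⟨_, by omega, fun t => rfl⟩
  · exact ⟨_, by omega, fun t => rfl⟩
  · exact ⟨_, by omega, fun t => rfl⟩
  · exact ⟨_, by omega, fun t => rfl⟩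

theorem smc_comm (m a b t : ℤ) : smc m a b t = smc m b a t := by
  unfold smc
  rw [add_comm a b]
  congr 1
  · apply propext
    constructor <;> intro h <;> omega
  · congr 1
    apply propext
    constructor <;> intro h <;> omega

theorem bgc_comm (m a b t : ℤ) : bgc m a b t = bgc m b a t := by
  unfold bgc
  rw [add_comm a b]
  congr 1
  · apply propext
    constructor <;> intro h <;> omega
  · congr 1
    apply propext
    constructor <;> intro h <;> omega

theorem GG_comm {m : ℤ} (hm : 7 ≤ m) (i j t : ℤ) (hi : 0 ≤ i) (hi' : i < 2 * m) (hj : 0 ≤ j)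
    (hj' : j < 2 * m) : GG m i j t = GG m j i t := by
  unfold GG
  rw [smc_comm m j i, smc_comm m (2 * m - 1 - j) (2 * m - 1 - i), bgc_comm m (2 * m - 1 - j) i,
    bgc_comm m j (2 * m - 1 - i), add_comm j i, abs_sub_comm i j]
  split_ifs <;> first | rfl | omega

theorem GG_rot {m : ℤ} (hm : 7 ≤ m) (i j t : ℤ) (hi : 0 ≤ i) (hi' : i < 2 * m) (hj : 0 ≤ j)
    (hj' : j < 2 * m) : GG m (2 * m - 1 - i) (2 * m - 1 - j) t = GG m i j t := by
  unfold GG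
  rw [show 2 * m - 1 - j - (2 * m - 1 - i) = -(j - i) by ring,
    show 2 * m - 1 - i + (2 * m - 1 - j) + 1 - 2 * m = -(i + j + 1 - 2 * m) by ring, abs_neg,
    abs_neg, sub_sub_cancel, sub_sub_cancel]
  split_ifs <;> first | rfl | omega

theorem dmc_neg {m e f t : ℤ} (hm : 7 ≤ m) : dmc m e f (-t) = dmc m e f t := by
  have h1 : ln (2 - m) (4 - m) (5 - m) (m - 5) (m - 4) (m - 2) (-t) =
      ln (2 - m) (4 - m) (5 - m) (m - 5) (m - 4) (m - 2) t := by
    rw [ln_neg (lo := 2 - m) (hi := m) (by unfold LnOK; omega)]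
    simp only [neg_sub]
  have h2 : blk (4 - m) (m - 4) (-t) = blk (4 - m) (m - 4) t := by
    rw [show 4 - m = -(m - 4) by ring, blk_neg]
  unfold dmc
  rw [blk_neg, h1, h2]

theorem GG_row {m i t : ℤ} (hm : 7 ≤ m) (hi : 0 ≤ i) (hi' : i ≤ m - 1)
    (p q l u r s : ℤ) (hok : LnOK 0 (2 * m) p q l u r s)
    (h1 : ∀ j, 0 ≤ j → i + j ≤ m - 2 → smc m i j t = ln p q l u r s j)
    (h2 : ∀ b, 0 ≤ b → i + b ≤ m - 1 → bgc m i b t = ln p q l u r s (2 * m - 1 - b))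
    (h3 : ∀ j e f, m - 1 - i ≤ j → j ≤ m - 1 + i →
      ((i ≤ j ∧ e = j - i + 1) ∨ (j < i ∧ e = i - j + 1)) →
      ((0 ≤ i + j + 1 - 2 * m ∧ f = i + j + 1 - 2 * m) ∨
        (i + j + 1 - 2 * m < 0 ∧ f = -(i + j + 1 - 2 * m))) →
      dmc m e f t = ln p q l u r s j) :
    AltZ 0 (2 * m) (fun j => GG m i j t) := by
  apply altZ_ln hok
  intro j hj hj'
  simp only [GG]
  split_ifs
  · exact h1 j hj (by omega)
  · omega
  · rw [h2 _ (by omega) (by omega), sub_sub_cancel]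
  · omega
  · apply h3 j _ _ (by omega) (by omega)
    · rcases abs_cases (j - i) with h | h <;> omega
    · rcases abs_cases (i + j + 1 - 2 * m) with h | h <;> omega

theorem dmc_mid {m e f t : ℤ} (hm : 7 ≤ m) (he : 1 ≤ e) (hf : 0 ≤ f) (hp : (e + f) % 2 = 0)
    (ht : 0 ≤ t) (ht' : t ≤ m - 4) :
    dmc m e f t = if e ≤ m - t ∧ f ≤ m - t then (if (m - e - t) % 2 = 0 then 1 else -1) else 0 := by
  unfold dmc
  rcases max_cases e f with ⟨h, h'⟩ | ⟨h, h'⟩ <;> rw [h]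
  all_goals
    unfold ln dl blk
    split_ifs <;> omega

theorem dmc_m3 {m e f : ℤ} (hm : 7 ≤ m) (he : 1 ≤ e) (hf : 0 ≤ f) (hp : (e + f) % 2 = 0) :
    dmc m e f (m - 3) = if f = 1 ∧ e ≤ 3 then 1 else if f = 0 ∧ e = 2 then -1 else 0 := by
  unfold dmc
  rcases max_cases e f with ⟨h, h'⟩ | ⟨h, h'⟩ <;> rw [h]
  all_goals
    unfold ln dl blk
    split_ifs <;> omega

theorem dmc_m2 {m e f : ℤ} (hm : 7 ≤ m) (he : 1 ≤ e) (hf : 0 ≤ f) (hp : (e + f) % 2 = 0) :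
    dmc m e f (m - 2) = if f = 3 ∧ e ≤ 3 then 1 else if f = 0 ∧ e = 2 then 1 else
      if f = 1 ∧ e = 1 then -1 else 0 := by
  unfold dmc
  rcases max_cases e f with ⟨h, h'⟩ | ⟨h, h'⟩ <;> rw [h]
  all_goals
    unfold ln dl blk
    split_ifs <;> omega

theorem dmc_m1 {m e f : ℤ} (hm : 7 ≤ m) (he : 1 ≤ e) (hf : 0 ≤ f) (hp : (e + f) % 2 = 0) :
    dmc m e f (m - 1) = if f = 1 ∧ e = 1 then 1 else 0 := by
  unfold dmc
  rcases max_cases e f with ⟨h, h'⟩ | ⟨h, h'⟩ <;> rw [h]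
  all_goals
    unfold ln dl blk
    split_ifs <;> omega

theorem dmc_m {m e f : ℤ} (hm : 7 ≤ m) (he : 1 ≤ e) (hf : 0 ≤ f) (hp : (e + f) % 2 = 0) :
    dmc m e f m = 0 := by
  unfold dmc
  rcases max_cases e f with ⟨h, h'⟩ | ⟨h, h'⟩ <;> rw [h]
  all_goals
    unfold ln dl blk
    split_ifs <;> omega

theorem smc_m1 {m a b : ℤ} (hm : 7 ≤ m) (ha : 0 ≤ a) (hb : 0 ≤ b) (h : a + b ≤ m - 2)
    : smc m a b (m - 1) = if a + b = m - 2 then 1 else 0 := by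
  rcases smc_cases hm ha hb h with ⟨hc, e⟩ | ⟨v, hc, e⟩ | ⟨hc, e⟩ <;> rw [e] <;> unfold dl
  all_goals split_ifs <;> first | contradiction | omega

theorem smc_three {m a b : ℤ} (hm : 7 ≤ m) (ha : 0 ≤ a) (hb : 0 ≤ b) (h : a + b ≤ m - 2)
    : smc m a b 3 = if a = 1 ∧ b = 1 then 1 else 0 := by
  rcases smc_cases hm ha hb h with ⟨hc, e⟩ | ⟨v, hc, e⟩ | ⟨hc, e⟩ <;> rw [e] <;> unfold dl
  all_goals split_ifs <;> first | contradiction | omega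

theorem smc_two {m a b : ℤ} (hm : 7 ≤ m) (ha : 0 ≤ a) (hb : 0 ≤ b) (h : a + b ≤ m - 2)
    : smc m a b 2 = if a + b = m - 3 then 1 else if a + b = m - 2 ∧ 1 ≤ a ∧ 1 ≤ b then -1 else 0 := by
  rcases smc_cases hm ha hb h with ⟨hc, e⟩ | ⟨v, hc, e⟩ | ⟨hc, e⟩ <;> rw [e] <;> unfold dl
  all_goals split_ifs <;> first | contradiction | omega

theorem smc_none {m a b : ℤ} (hm : 7 ≤ m) (ha : 0 ≤ a) (hb : 0 ≤ b) (h : a + b ≤ m - 2)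
    : smc m a b (-1) = if a + b = 1 then 1 else if a = 1 ∧ b = 1 then -1 else 0 := by
  rcases smc_cases hm ha hb h with ⟨hc, e⟩ | ⟨v, hc, e⟩ | ⟨hc, e⟩ <;> rw [e] <;> unfold dl
  all_goals split_ifs <;> first | contradiction | omega

theorem smc_nmid {m a b t : ℤ} (hm : 7 ≤ m) (ha : 0 ≤ a) (hb : 0 ≤ b) (h : a + b ≤ m - 2)
    (ht : 3 ≤ t) (ht2 : t ≤ m - 4) : smc m a b (-t) = if a + b = t - 1 then 1 else 0 := by
  rcases smc_cases hm ha hb h with ⟨hc, e⟩ | ⟨v, hc, e⟩ | ⟨hc, e⟩ <;> rw [e] <;> unfold dl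
  all_goals split_ifs <;> first | contradiction | omega

theorem smc_nm3 {m a b : ℤ} (hm : 7 ≤ m) (ha : 0 ≤ a) (hb : 0 ≤ b) (h : a + b ≤ m - 2)
    : smc m a b (-(m - 3)) = if a + b = 0 ∨ (a + b = m - 2 ∧ 1 ≤ a ∧ 1 ≤ b) then 1 else 0 := by
  rcases smc_cases hm ha hb h with ⟨hc, e⟩ | ⟨v, hc, e⟩ | ⟨hc, e⟩ <;> rw [e] <;> unfold dl
  all_goals split_ifs <;> first | contradiction | omega

theorem smc_nm2 {m a b : ℤ} (hm : 7 ≤ m) (ha : 0 ≤ a) (hb : 0 ≤ b) (h : a + b ≤ m - 2)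
    : smc m a b (-(m - 2)) = if a + b = m - 4 then 1 else 0 := by
  rcases smc_cases hm ha hb h with ⟨hc, e⟩ | ⟨v, hc, e⟩ | ⟨hc, e⟩ <;> rw [e] <;> unfold dl
  all_goals split_ifs <;> first | contradiction | omega

theorem smc_zero {m a b t : ℤ} (hm : 7 ≤ m) (ha : 0 ≤ a) (hb : 0 ≤ b) (h : a + b ≤ m - 2)
    (ht : t = 0 ∨ t = 1 ∨ t = -2 ∨ (4 ≤ t ∧ t ≤ m - 2) ∨ t = m ∨ t = -(m - 1)) : smc m a b t = 0 := by
  rcases smc_cases hm ha hb h with ⟨hc, e⟩ | ⟨v, hc, e⟩ | ⟨hc, e⟩ <;> rw [e] <;> unfold dl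
  all_goals split_ifs <;> first | contradiction | omega

theorem bgc_m {m a b : ℤ} (hm : 7 ≤ m) (ha : 0 ≤ a) (hb : 0 ≤ b) (h : a + b ≤ m - 1)
    : bgc m a b m = if a + b = m - 1 then 1 else 0 := by
  rcases bgc_cases hm ha hb h with ⟨hc, e⟩ | ⟨v, hc, e⟩ <;> rw [e] <;> unfold dl
  all_goals split_ifs <;> first | contradiction | omega

theorem bgc_m2 {m a b : ℤ} (hm : 7 ≤ m) (ha : 0 ≤ a) (hb : 0 ≤ b) (h : a + b ≤ m - 1)
    : bgc m a b (m - 2) = if a + b = m - 4 then 1 else 0 := by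
  rcases bgc_cases hm ha hb h with ⟨hc, e⟩ | ⟨v, hc, e⟩ <;> rw [e] <;> unfold dl
  all_goals split_ifs <;> first | contradiction | omega

theorem bgc_m3 {m a b : ℤ} (hm : 7 ≤ m) (ha : 0 ≤ a) (hb : 0 ≤ b) (h : a + b ≤ m - 1)
    : bgc m a b (m - 3) = if a + b = m - 3 then 1 else 0 := by
  rcases bgc_cases hm ha hb h with ⟨hc, e⟩ | ⟨v, hc, e⟩ <;> rw [e] <;> unfold dl
  all_goals split_ifs <;> first | contradiction | omega

theorem bgc_mid {m a b t : ℤ} (hm : 7 ≤ m) (ha : 0 ≤ a) (hb : 0 ≤ b) (h : a + b ≤ m - 1)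
    (ht : 4 ≤ t) (ht2 : t ≤ m - 4) : bgc m a b t = if a + b = t - 1 then 1 else 0 := by
  rcases bgc_cases hm ha hb h with ⟨hc, e⟩ | ⟨v, hc, e⟩ <;> rw [e] <;> unfold dl
  all_goals split_ifs <;> first | contradiction | omega

theorem bgc_three {m a b : ℤ} (hm : 7 ≤ m) (ha : 0 ≤ a) (hb : 0 ≤ b) (h : a + b ≤ m - 1)
    : bgc m a b 3 = if a + b = 2 ∧ a ≠ 1 then 1 else 0 := by
  rcases bgc_cases hm ha hb h with ⟨hc, e⟩ | ⟨v, hc, e⟩ <;> rw [e] <;> unfold dl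
  all_goals split_ifs <;> first | contradiction | omega

theorem bgc_two {m a b : ℤ} (hm : 7 ≤ m) (ha : 0 ≤ a) (hb : 0 ≤ b) (h : a + b ≤ m - 1)
    : bgc m a b 2 = if a = 1 ∧ b = 1 then 1 else 0 := by
  rcases bgc_cases hm ha hb h with ⟨hc, e⟩ | ⟨v, hc, e⟩ <;> rw [e] <;> unfold dl
  all_goals split_ifs <;> first | contradiction | omega

theorem bgc_one {m a b : ℤ} (hm : 7 ≤ m) (ha : 0 ≤ a) (hb : 0 ≤ b) (h : a + b ≤ m - 1)
    : bgc m a b 1 = if a + b = m - 2 then 1 else if a + b = m - 1 ∧ 1 ≤ a ∧ 1 ≤ b then -1 else 0 := by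
  rcases bgc_cases hm ha hb h with ⟨hc, e⟩ | ⟨v, hc, e⟩ <;> rw [e] <;> unfold dl
  all_goals split_ifs <;> first | contradiction | omega

theorem bgc_ntwo {m a b : ℤ} (hm : 7 ≤ m) (ha : 0 ≤ a) (hb : 0 ≤ b) (h : a + b ≤ m - 1)
    : bgc m a b (-2) = if a + b = 1 then 1 else 0 := by
  rcases bgc_cases hm ha hb h with ⟨hc, e⟩ | ⟨v, hc, e⟩ <;> rw [e] <;> unfold dl
  all_goals split_ifs <;> first | contradiction | omega

theorem bgc_nm1 {m a b : ℤ} (hm : 7 ≤ m) (ha : 0 ≤ a) (hb : 0 ≤ b) (h : a + b ≤ m - 1)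
    : bgc m a b (-(m - 1)) = if a + b = 0 ∨ (a + b = m - 1 ∧ 1 ≤ a ∧ 1 ≤ b) then 1 else 0 := by
  rcases bgc_cases hm ha hb h with ⟨hc, e⟩ | ⟨v, hc, e⟩ <;> rw [e] <;> unfold dl
  all_goals split_ifs <;> first | contradiction | omega

theorem bgc_zero {m a b t : ℤ} (hm : 7 ≤ m) (ha : 0 ≤ a) (hb : 0 ≤ b) (h : a + b ≤ m - 1)
    (ht : t = 0 ∨ t = m - 1 ∨ t = -1 ∨ (-(m - 2) ≤ t ∧ t ≤ -3)) : bgc m a b t = 0 := by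
  rcases bgc_cases hm ha hb h with ⟨hc, e⟩ | ⟨v, hc, e⟩ <;> rw [e] <;> unfold dl
  all_goals split_ifs <;> first | contradiction | omega

theorem GG_m {m i : ℤ} (hm : 7 ≤ m) (hi : 0 ≤ i) (hi' : i ≤ m - 1) :
    AltZ 0 (2 * m) (fun j => GG m i j m) := by
  apply GG_row hm hi hi' 0 0 (m + i) (m + i) 0 0 (by unfold LnOK; omega)
  · intro j hj hj'
    rw [smc_zero hm hi hj hj' (by omega), blk_single, dl]
    split_ifs <;> omega
  · intro j hj hj'
    rw [bgc_m hm hi hj hj', blk_single, dl]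
    split_ifs <;> omega
  · intro j e f hj hj' he hf
    rw [dmc_m hm (by omega) (by omega) (by omega), blk_single, dl]
    split_ifs <;> omega

theorem GG_m1 {m i : ℤ} (hm : 7 ≤ m) (hi : 0 ≤ i) (hi' : i ≤ m - 1) :
    AltZ 0 (2 * m) (fun j => GG m i j (m - 1)) := by
  obtain ⟨y, hy⟩ : ∃ y, (i ≤ m - 2 ∧ y = m - 2 - i) ∨ (i = m - 1 ∧ y = m - 1) := by
    rcases (by omega : (i ≤ m - 2) ∨ (i = m - 1)) with h | h
    · exact ⟨m - 2 - i, by omega⟩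
    · exact ⟨m - 1, by omega⟩
  apply GG_row hm hi hi' 0 0 y y 0 0 (by unfold LnOK; omega)
  · intro j hj hj'
    rw [smc_m1 hm hi hj hj', blk_single, dl]
    split_ifs <;> omega
  · intro j hj hj'
    rw [bgc_zero hm hi hj hj' (by omega), blk_single, dl]
    split_ifs <;> omega
  · intro j e f hj hj' he hf
    rw [dmc_m1 hm (by omega) (by omega) (by omega), blk_single, dl]
    split_ifs <;> omega

theorem GG_m2 {m i : ℤ} (hm : 7 ≤ m) (hi : 0 ≤ i) (hi' : i ≤ m - 1) :
    AltZ 0 (2 * m) (fun j => GG m i j (m - 2)) := by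
  rcases (by omega : (i ≤ m - 2) ∨ (i = m - 1)) with h | h
  · obtain ⟨y, hy⟩ : ∃ y, (i ≤ m - 4 ∧ y = m + 3 + i) ∨ (i = m - 3 ∧ y = m - 1) ∨ (i = m - 2 ∧ y = m - 2) := by
      rcases (by omega : (i ≤ m - 4) ∨ (i = m - 3) ∨ (i = m - 2)) with h | h | h
      · exact ⟨m + 3 + i, by omega⟩
      · exact ⟨m - 1, by omega⟩
      · exact ⟨m - 2, by omega⟩
    apply GG_row hm hi hi' 0 0 y y 0 0 (by unfold LnOK; omega)
    · intro j hj hj'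
      rw [smc_zero hm hi hj hj' (by omega), blk_single, dl]
      split_ifs <;> omega
    · intro j hj hj'
      rw [bgc_m2 hm hi hj hj', blk_single, dl]
      split_ifs <;> omega
    · intro j e f hj hj' he hf
      rw [dmc_m2 hm (by omega) (by omega) (by omega), blk_single, dl]
      split_ifs <;> omega
  · apply GG_row hm hi hi' (m - 3) (m - 1) m m 0 0 (by unfold LnOK; omega)
    · intro j hj hj'
      rw [smc_zero hm hi hj hj' (by omega), ln, blk, dl, dl]
      split_ifs <;> omega
    · intro j hj hj'
      rw [bgc_m2 hm hi hj hj', ln, blk, dl, dl]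
      split_ifs <;> omega
    · intro j e f hj hj' he hf
      rw [dmc_m2 hm (by omega) (by omega) (by omega), ln, blk, dl, dl]
      split_ifs <;> omega

theorem GG_m3 {m i : ℤ} (hm : 7 ≤ m) (hi : 0 ≤ i) (hi' : i ≤ m - 1) :
    AltZ 0 (2 * m) (fun j => GG m i j (m - 3)) := by
  rcases (by omega : (i ≤ m - 3) ∨ (m - 2 ≤ i)) with h | h
  · apply GG_row hm hi hi' 0 0 (m + 2 + i) (m + 2 + i) 0 0 (by unfold LnOK; omega)
    · intro j hj hj'
      rw [smc_zero hm hi hj hj' (by omega), blk_single, dl]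
      split_ifs <;> omega
    · intro j hj hj'
      rw [bgc_m3 hm hi hj hj', blk_single, dl]
      split_ifs <;> omega
    · intro j e f hj hj' he hf
      rw [dmc_m3 hm (by omega) (by omega) (by omega), blk_single, dl]
      split_ifs <;> omega
  · apply GG_row hm hi hi' 0 0 (m - 1 + (m - 3) - i + 2) (m - 1 - (m - 3) + i) 0 0 (by unfold LnOK; omega)
    · intro j hj hj'
      rw [smc_zero hm hi hj hj' (by omega), ln_blk, blk]
      split_ifs <;> omega
    · intro j hj hj'
      rw [bgc_m3 hm hi hj hj', ln_blk, blk]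
      split_ifs <;> omega
    · intro j e f hj hj' he hf
      rw [dmc_m3 hm (by omega) (by omega) (by omega), ln_blk, blk]
      split_ifs <;> omega

theorem GG_mid {m i t : ℤ} (hm : 7 ≤ m) (hi : 0 ≤ i) (hi' : i ≤ m - 1) (ht : 4 ≤ t) (ht2 : t ≤ m - 4) :
    AltZ 0 (2 * m) (fun j => GG m i j t) := by
  rcases (by omega : (i < t) ∨ (t ≤ i)) with h | h
  · apply GG_row hm hi hi' 0 0 (2 * m - t + i) (2 * m - t + i) 0 0 (by unfold LnOK; omega)
    · intro j hj hj'
      rw [smc_zero hm hi hj hj' (by omega), blk_single, dl]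
      split_ifs <;> omega
    · intro j hj hj'
      rw [bgc_mid hm hi hj hj' (by omega) (by omega), blk_single, dl]
      split_ifs <;> omega
    · intro j e f hj hj' he hf
      rw [dmc_mid hm (by omega) (by omega) (by omega) (by omega) (by omega), blk_single, dl]
      split_ifs <;> omega
  · apply GG_row hm hi hi' 0 0 (m - 1 + t - i) (m - 1 - t + i) 0 0 (by unfold LnOK; omega)
    · intro j hj hj'
      rw [smc_zero hm hi hj hj' (by omega), ln_blk, blk]
      split_ifs <;> omega
    · intro j hj hj'
      rw [bgc_mid hm hi hj hj' (by omega) (by omega), ln_blk, blk]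
      split_ifs <;> omega
    · intro j e f hj hj' he hf
      rw [dmc_mid hm (by omega) (by omega) (by omega) (by omega) (by omega), ln_blk, blk]
      split_ifs <;> omega

theorem GG_3 {m i : ℤ} (hm : 7 ≤ m) (hi : 0 ≤ i) (hi' : i ≤ m - 1) :
    AltZ 0 (2 * m) (fun j => GG m i j 3) := by
  rcases (by omega : (i ≤ 2) ∨ (3 ≤ i)) with h | h
  · obtain ⟨y, hy⟩ : ∃ y, (i = 0 ∧ y = 2 * m - 3) ∨ (i = 1 ∧ y = 1) ∨ (i = 2 ∧ y = 2 * m - 1) := by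
      rcases (by omega : (i = 0) ∨ (i = 1) ∨ (i = 2)) with h | h | h
      · exact ⟨2 * m - 3, by omega⟩
      · exact ⟨1, by omega⟩
      · exact ⟨2 * m - 1, by omega⟩
    apply GG_row hm hi hi' 0 0 y y 0 0 (by unfold LnOK; omega)
    · intro j hj hj'
      rw [smc_three hm hi hj hj', blk_single, dl]
      split_ifs <;> omega
    · intro j hj hj'
      rw [bgc_three hm hi hj hj', blk_single, dl]
      split_ifs <;> omega
    · intro j e f hj hj' he hf
      rw [dmc_mid hm (by omega) (by omega) (by omega) (by omega) (by omega), blk_single, dl]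
      split_ifs <;> omega
  · apply GG_row hm hi hi' 0 0 (m - 1 + 3 - i) (m - 1 - 3 + i) 0 0 (by unfold LnOK; omega)
    · intro j hj hj'
      rw [smc_three hm hi hj hj', ln_blk, blk]
      split_ifs <;> omega
    · intro j hj hj'
      rw [bgc_three hm hi hj hj', ln_blk, blk]
      split_ifs <;> omega
    · intro j e f hj hj' he hf
      rw [dmc_mid hm (by omega) (by omega) (by omega) (by omega) (by omega), ln_blk, blk]
      split_ifs <;> omega

theorem GG_2 {m i : ℤ} (hm : 7 ≤ m) (hi : 0 ≤ i) (hi' : i ≤ m - 1) :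
    AltZ 0 (2 * m) (fun j => GG m i j 2) := by
  rcases (by omega : (i = 0) ∨ (i = 1) ∨ (2 ≤ i ∧ i ≤ m - 3) ∨ (m - 2 ≤ i)) with h | h | h | h
  · apply GG_row hm hi hi' 0 0 (m - 3) (m - 3) 0 0 (by unfold LnOK; omega)
    · intro j hj hj'
      rw [smc_two hm hi hj hj', blk_single, dl]
      split_ifs <;> omega
    · intro j hj hj'
      rw [bgc_two hm hi hj hj', blk_single, dl]
      split_ifs <;> omega
    · intro j e f hj hj' he hf
      rw [dmc_mid hm (by omega) (by omega) (by omega) (by omega) (by omega), blk_single, dl]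
      split_ifs <;> omega
  · apply GG_row hm hi hi' (m - 4) (m - 3) (2 * m - 2) (2 * m - 2) 0 0 (by unfold LnOK; omega)
    · intro j hj hj'
      rw [smc_two hm hi hj hj', ln, blk, dl, dl]
      split_ifs <;> omega
    · intro j hj hj'
      rw [bgc_two hm hi hj hj', ln, blk, dl, dl]
      split_ifs <;> omega
    · intro j e f hj hj' he hf
      rw [dmc_mid hm (by omega) (by omega) (by omega) (by omega) (by omega), ln, blk, dl, dl]
      split_ifs <;> omega
  · apply GG_row hm hi hi' (m - 3 - i) (m - 2 - i) (m - 1 + 2 - i) (m - 1 - 2 + i) 0 0 (by unfold LnOK; omega)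
    · intro j hj hj'
      rw [smc_two hm hi hj hj', ln, blk, dl, dl]
      split_ifs <;> omega
    · intro j hj hj'
      rw [bgc_two hm hi hj hj', ln, blk, dl, dl]
      split_ifs <;> omega
    · intro j e f hj hj' he hf
      rw [dmc_mid hm (by omega) (by omega) (by omega) (by omega) (by omega), ln, blk, dl, dl]
      split_ifs <;> omega
  · apply GG_row hm hi hi' 0 0 (m - 1 + 2 - i) (m - 1 - 2 + i) 0 0 (by unfold LnOK; omega)
    · intro j hj hj'
      rw [smc_two hm hi hj hj', ln_blk, blk]
      split_ifs <;> omega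
    · intro j hj hj'
      rw [bgc_two hm hi hj hj', ln_blk, blk]
      split_ifs <;> omega
    · intro j e f hj hj' he hf
      rw [dmc_mid hm (by omega) (by omega) (by omega) (by omega) (by omega), ln_blk, blk]
      split_ifs <;> omega

theorem GG_1 {m i : ℤ} (hm : 7 ≤ m) (hi : 0 ≤ i) (hi' : i ≤ m - 1) :
    AltZ 0 (2 * m) (fun j => GG m i j 1) := by
  rcases (by omega : (i = 0) ∨ (1 ≤ i ∧ i ≤ m - 2) ∨ (i = m - 1)) with h | h | h
  · apply GG_row hm hi hi' 0 0 (m + 1) (m + 1) 0 0 (by unfold LnOK; omega)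
    · intro j hj hj'
      rw [smc_zero hm hi hj hj' (by omega), blk_single, dl]
      split_ifs <;> omega
    · intro j hj hj'
      rw [bgc_one hm hi hj hj', blk_single, dl]
      split_ifs <;> omega
    · intro j e f hj hj' he hf
      rw [dmc_mid hm (by omega) (by omega) (by omega) (by omega) (by omega), blk_single, dl]
      split_ifs <;> omega
  · apply GG_row hm hi hi' 0 0 (m - 1 + 1 - i) (m - 1 - 1 + i) (m + i) (m + 1 + i) (by unfold LnOK; omega)
    · intro j hj hj'
      rw [smc_zero hm hi hj hj' (by omega), ln, blk, dl, dl, dl]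
      split_ifs <;> omega
    · intro j hj hj'
      rw [bgc_one hm hi hj hj', ln, blk, dl, dl, dl]
      split_ifs <;> omega
    · intro j e f hj hj' he hf
      rw [dmc_mid hm (by omega) (by omega) (by omega) (by omega) (by omega), ln, blk, dl, dl, dl]
      split_ifs <;> omega
  · apply GG_row hm hi hi' 0 0 (m - 1 + 1 - i) (m - 1 - 1 + i) 0 0 (by unfold LnOK; omega)
    · intro j hj hj'
      rw [smc_zero hm hi hj hj' (by omega), ln_blk, blk]
      split_ifs <;> omega
    · intro j hj hj'
      rw [bgc_one hm hi hj hj', ln_blk, blk]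
      split_ifs <;> omega
    · intro j e f hj hj' he hf
      rw [dmc_mid hm (by omega) (by omega) (by omega) (by omega) (by omega), ln_blk, blk]
      split_ifs <;> omega

theorem GG_0 {m i : ℤ} (hm : 7 ≤ m) (hi : 0 ≤ i) (hi' : i ≤ m - 1) :
    AltZ 0 (2 * m) (fun j => GG m i j 0) := by
  apply GG_row hm hi hi' 0 0 (m - 1 - i) (m - 1 + i) 0 0 (by unfold LnOK; omega)
  · intro j hj hj'
    rw [smc_zero hm hi hj hj' (by omega), ln_blk, blk]
    split_ifs <;> omega
  · intro j hj hj'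
    rw [bgc_zero hm hi hj hj' (by omega), ln_blk, blk]
    split_ifs <;> omega
  · intro j e f hj hj' he hf
    rw [dmc_mid hm (by omega) (by omega) (by omega) (by omega) (by omega), ln_blk, blk]
    split_ifs <;> omega

theorem GG_n1 {m i : ℤ} (hm : 7 ≤ m) (hi : 0 ≤ i) (hi' : i ≤ m - 1) :
    AltZ 0 (2 * m) (fun j => GG m i j (-1)) := by
  rcases (by omega : (i = 0) ∨ (i = 1) ∨ (2 ≤ i)) with h | h | h
  · apply GG_row hm hi hi' 0 0 1 1 0 0 (by unfold LnOK; omega)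
    · intro j hj hj'
      rw [smc_none hm hi hj hj', blk_single, dl]
      split_ifs <;> omega
    · intro j hj hj'
      rw [bgc_zero hm hi hj hj' (by omega), blk_single, dl]
      split_ifs <;> omega
    · intro j e f hj hj' he hf
      rw [dmc_neg hm, dmc_mid hm (by omega) (by omega) (by omega) (by omega) (by omega), blk_single, dl]
      split_ifs <;> omega
  · apply GG_row hm hi hi' 0 1 (m - 1 + 1 - i) (m - 1 - 1 + i) 0 0 (by unfold LnOK; omega)
    · intro j hj hj'
      rw [smc_none hm hi hj hj', ln, blk, dl, dl]
      split_ifs <;> omega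
    · intro j hj hj'
      rw [bgc_zero hm hi hj hj' (by omega), ln, blk, dl, dl]
      split_ifs <;> omega
    · intro j e f hj hj' he hf
      rw [dmc_neg hm, dmc_mid hm (by omega) (by omega) (by omega) (by omega) (by omega), ln, blk, dl, dl]
      split_ifs <;> omega
  · apply GG_row hm hi hi' 0 0 (m - 1 + 1 - i) (m - 1 - 1 + i) 0 0 (by unfold LnOK; omega)
    · intro j hj hj'
      rw [smc_none hm hi hj hj', ln_blk, blk]
      split_ifs <;> omega
    · intro j hj hj'
      rw [bgc_zero hm hi hj hj' (by omega), ln_blk, blk]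
      split_ifs <;> omega
    · intro j e f hj hj' he hf
      rw [dmc_neg hm, dmc_mid hm (by omega) (by omega) (by omega) (by omega) (by omega), ln_blk, blk]
      split_ifs <;> omega

theorem GG_n2 {m i : ℤ} (hm : 7 ≤ m) (hi : 0 ≤ i) (hi' : i ≤ m - 1) :
    AltZ 0 (2 * m) (fun j => GG m i j (-2)) := by
  rcases (by omega : (i ≤ 1) ∨ (2 ≤ i)) with h | h
  · apply GG_row hm hi hi' 0 0 (2 * m - 2 + i) (2 * m - 2 + i) 0 0 (by unfold LnOK; omega)
    · intro j hj hj'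
      rw [smc_zero hm hi hj hj' (by omega), blk_single, dl]
      split_ifs <;> omega
    · intro j hj hj'
      rw [bgc_ntwo hm hi hj hj', blk_single, dl]
      split_ifs <;> omega
    · intro j e f hj hj' he hf
      rw [dmc_neg hm, dmc_mid hm (by omega) (by omega) (by omega) (by omega) (by omega), blk_single, dl]
      split_ifs <;> omega
  · apply GG_row hm hi hi' 0 0 (m - 1 + 2 - i) (m - 1 - 2 + i) 0 0 (by unfold LnOK; omega)
    · intro j hj hj'
      rw [smc_zero hm hi hj hj' (by omega), ln_blk, blk]
      split_ifs <;> omega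
    · intro j hj hj'
      rw [bgc_ntwo hm hi hj hj', ln_blk, blk]
      split_ifs <;> omega
    · intro j e f hj hj' he hf
      rw [dmc_neg hm, dmc_mid hm (by omega) (by omega) (by omega) (by omega) (by omega), ln_blk, blk]
      split_ifs <;> omega

theorem GG_nmid {m i t : ℤ} (hm : 7 ≤ m) (hi : 0 ≤ i) (hi' : i ≤ m - 1) (ht : 3 ≤ t) (ht2 : t ≤ m - 4) :
    AltZ 0 (2 * m) (fun j => GG m i j (-t)) := by
  rcases (by omega : (i < t) ∨ (t ≤ i)) with h | h
  · apply GG_row hm hi hi' 0 0 (t - 1 - i) (t - 1 - i) 0 0 (by unfold LnOK; omega)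
    · intro j hj hj'
      rw [smc_nmid hm hi hj hj' (by omega) (by omega), blk_single, dl]
      split_ifs <;> omega
    · intro j hj hj'
      rw [bgc_zero hm hi hj hj' (by omega), blk_single, dl]
      split_ifs <;> omega
    · intro j e f hj hj' he hf
      rw [dmc_neg hm, dmc_mid hm (by omega) (by omega) (by omega) (by omega) (by omega), blk_single, dl]
      split_ifs <;> omega
  · apply GG_row hm hi hi' 0 0 (m - 1 + t - i) (m - 1 - t + i) 0 0 (by unfold LnOK; omega)
    · intro j hj hj'
      rw [smc_nmid hm hi hj hj' (by omega) (by omega), ln_blk, blk]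
      split_ifs <;> omega
    · intro j hj hj'
      rw [bgc_zero hm hi hj hj' (by omega), ln_blk, blk]
      split_ifs <;> omega
    · intro j e f hj hj' he hf
      rw [dmc_neg hm, dmc_mid hm (by omega) (by omega) (by omega) (by omega) (by omega), ln_blk, blk]
      split_ifs <;> omega

theorem GG_nm3 {m i : ℤ} (hm : 7 ≤ m) (hi : 0 ≤ i) (hi' : i ≤ m - 1) :
    AltZ 0 (2 * m) (fun j => GG m i j (-(m - 3))) := by
  rcases (by omega : (i ≤ m - 3) ∨ (m - 2 ≤ i)) with h | h
  · obtain ⟨y, hy⟩ : ∃ y, (i = 0 ∧ y = 0) ∨ (1 ≤ i ∧ y = m - 2 - i) := by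
      rcases (by omega : (i = 0) ∨ (1 ≤ i)) with h | h
      · exact ⟨0, by omega⟩
      · exact ⟨m - 2 - i, by omega⟩
    apply GG_row hm hi hi' 0 0 y y 0 0 (by unfold LnOK; omega)
    · intro j hj hj'
      rw [smc_nm3 hm hi hj hj', blk_single, dl]
      split_ifs <;> omega
    · intro j hj hj'
      rw [bgc_zero hm hi hj hj' (by omega), blk_single, dl]
      split_ifs <;> omega
    · intro j e f hj hj' he hf
      rw [dmc_neg hm, dmc_m3 hm (by omega) (by omega) (by omega), blk_single, dl]
      split_ifs <;> omega
  · apply GG_row hm hi hi' 0 0 (m - 1 + (m - 3) - i + 2) (m - 1 - (m - 3) + i) 0 0 (by unfold LnOK; omega)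
    · intro j hj hj'
      rw [smc_nm3 hm hi hj hj', ln_blk, blk]
      split_ifs <;> omega
    · intro j hj hj'
      rw [bgc_zero hm hi hj hj' (by omega), ln_blk, blk]
      split_ifs <;> omega
    · intro j e f hj hj' he hf
      rw [dmc_neg hm, dmc_m3 hm (by omega) (by omega) (by omega), ln_blk, blk]
      split_ifs <;> omega

theorem GG_nm2 {m i : ℤ} (hm : 7 ≤ m) (hi : 0 ≤ i) (hi' : i ≤ m - 1) :
    AltZ 0 (2 * m) (fun j => GG m i j (-(m - 2))) := by
  rcases (by omega : (i ≤ m - 2) ∨ (i = m - 1)) with h | h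
  · obtain ⟨y, hy⟩ : ∃ y, (i ≤ m - 4 ∧ y = m - 4 - i) ∨ (i = m - 3 ∧ y = m - 1) ∨ (i = m - 2 ∧ y = m - 2) := by
      rcases (by omega : (i ≤ m - 4) ∨ (i = m - 3) ∨ (i = m - 2)) with h | h | h
      · exact ⟨m - 4 - i, by omega⟩
      · exact ⟨m - 1, by omega⟩
      · exact ⟨m - 2, by omega⟩
    apply GG_row hm hi hi' 0 0 y y 0 0 (by unfold LnOK; omega)
    · intro j hj hj'
      rw [smc_nm2 hm hi hj hj', blk_single, dl]
      split_ifs <;> omega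
    · intro j hj hj'
      rw [bgc_zero hm hi hj hj' (by omega), blk_single, dl]
      split_ifs <;> omega
    · intro j e f hj hj' he hf
      rw [dmc_neg hm, dmc_m2 hm (by omega) (by omega) (by omega), blk_single, dl]
      split_ifs <;> omega
  · apply GG_row hm hi hi' (m - 3) (m - 1) m m 0 0 (by unfold LnOK; omega)
    · intro j hj hj'
      rw [smc_nm2 hm hi hj hj', ln, blk, dl, dl]
      split_ifs <;> omega
    · intro j hj hj'
      rw [bgc_zero hm hi hj hj' (by omega), ln, blk, dl, dl]
      split_ifs <;> omega
    · intro j e f hj hj' he hf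
      rw [dmc_neg hm, dmc_m2 hm (by omega) (by omega) (by omega), ln, blk, dl, dl]
      split_ifs <;> omega

theorem GG_nm1 {m i : ℤ} (hm : 7 ≤ m) (hi : 0 ≤ i) (hi' : i ≤ m - 1) :
    AltZ 0 (2 * m) (fun j => GG m i j (-(m - 1))) := by
  obtain ⟨y, hy⟩ : ∃ y, (i = 0 ∧ y = 2 * m - 1) ∨ (1 ≤ i ∧ i ≤ m - 2 ∧ y = m + i) ∨ (i = m - 1 ∧ y = m - 1) := by
    rcases (by omega : (i = 0) ∨ (1 ≤ i ∧ i ≤ m - 2) ∨ (i = m - 1)) with h | h | h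
    · exact ⟨2 * m - 1, by omega⟩
    · exact ⟨m + i, by omega⟩
    · exact ⟨m - 1, by omega⟩
  apply GG_row hm hi hi' 0 0 y y 0 0 (by unfold LnOK; omega)
  · intro j hj hj'
    rw [smc_zero hm hi hj hj' (by omega), blk_single, dl]
    split_ifs <;> omega
  · intro j hj hj'
    rw [bgc_nm1 hm hi hj hj', blk_single, dl]
    split_ifs <;> omega
  · intro j e f hj hj' he hf
    rw [dmc_neg hm, dmc_m1 hm (by omega) (by omega) (by omega), blk_single, dl]
    split_ifs <;> omega

theorem GG_top {m i t : ℤ} (hm : 7 ≤ m) (hi : 0 ≤ i) (hi' : i ≤ m - 1) (ht : 1 - m ≤ t)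
    (ht' : t ≤ m) : AltZ 0 (2 * m) (fun j => GG m i j t) := by
  rcases le_or_gt 0 t with h | h
  · rcases (by omega : t = 0 ∨ t = 1 ∨ t = 2 ∨ t = 3 ∨ (4 ≤ t ∧ t ≤ m - 4) ∨ t = m - 3 ∨
      t = m - 2 ∨ t = m - 1 ∨ t = m) with rfl | rfl | rfl | rfl | ⟨h1, h2⟩ | rfl | rfl | rfl | rfl
    · exact GG_0 hm hi hi'
    · exact GG_1 hm hi hi'
    · exact GG_2 hm hi hi'
    · exact GG_3 hm hi hi'
    · exact GG_mid hm hi hi' h1 h2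
    · exact GG_m3 hm hi hi'
    · exact GG_m2 hm hi hi'
    · exact GG_m1 hm hi hi'
    · exact GG_m hm hi hi'
  · obtain ⟨s, rfl⟩ : ∃ s, t = -s := ⟨-t, by ring⟩
    rcases (by omega : s = 1 ∨ s = 2 ∨ (3 ≤ s ∧ s ≤ m - 4) ∨ s = m - 3 ∨
      s = m - 2 ∨ s = m - 1) with rfl | rfl | ⟨h1, h2⟩ | rfl | rfl | rfl
    · exact GG_n1 hm hi hi'
    · exact GG_n2 hm hi hi'
    · exact GG_nmid hm hi hi' h1 h2
    · exact GG_nm3 hm hi hi'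
    · exact GG_nm2 hm hi hi'
    · exact GG_nm1 hm hi hi'

theorem GG_alt {m i t : ℤ} (hm : 7 ≤ m) (hi : 0 ≤ i) (hi' : i < 2 * m) (ht : 1 - m ≤ t)
    (ht' : t ≤ m) : AltZ 0 (2 * m) (fun j => GG m i j t) := by
  rcases le_or_gt i (m - 1) with h | h
  · exact GG_top hm hi h ht ht'
  · apply (GG_top (i := 2 * m - 1 - i) hm (by omega) (by omega) ht ht').reflect
    intro x hx hx'
    rw [← GG_rot hm i x t hi (by omega) hx hx']

def elo (m i : ℤ) : ℤ :=
  if i = 0 then m - 1 else if i ≤ m - 3 then m - 2 - i else m - 1 - i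
def ehi (m i : ℤ) : ℤ :=
  if i = 0 then m - 1 else if i ≤ m - 2 then m + i else m - 1 + i

theorem smc_cell {m a b : ℤ} (hm : 7 ≤ m) (ha : 0 ≤ a) (hb : 0 ≤ b) (h : a + b ≤ m - 2) :
    ∃ p q l u r s, LnOK (1 - m) (m + 1) p q l u r s ∧ (∀ t, smc m a b t = ln p q l u r s t) ∧
      (2 * (p - q) + (l + u) + 2 * (s - r) = 0 ↔ a + b = m - 2 ∧ 1 ≤ a ∧ 1 ≤ b) := by
  by_cases h1 : a + b = m - 2 ∧ 1 ≤ a ∧ 1 ≤ b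
  · exact ⟨3 - m, 2, m - 1, m - 1, 0, 0, by unfold LnOK; omega,
      fun t => by simp only [smc, if_pos h1], by omega⟩
  by_cases h2 : a = 1 ∧ b = 1
  · exact ⟨-3, -1, 3, 3, 0, 0, by unfold LnOK; omega,
      fun t => by simp only [smc, if_neg h1, if_pos h2], by omega⟩
  obtain ⟨v, hv, e⟩ : ∃ v, (v ≠ 0 ∧ 1 - m ≤ v ∧ v ≤ m) ∧ ∀ t, smc m a b t = dl v t := by
    unfold smc
    simp only [if_neg h1, if_neg h2]
    split_ifs
    · exact ⟨_, by omega, fun t => rfl⟩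
    · exact ⟨_, by omega, fun t => rfl⟩
    · exact ⟨_, by omega, fun t => rfl⟩
    · exact ⟨_, by omega, fun t => rfl⟩
    · exact ⟨_, by omega, fun t => rfl⟩
    · exact ⟨_, by omega, fun t => rfl⟩
  refine ⟨0, 0, v, v, 0, 0, by unfold LnOK; omega, ?_, by omega⟩
  intro t
  rw [e, blk_single]

theorem bgc_cell {m a b : ℤ} (hm : 7 ≤ m) (ha : 0 ≤ a) (hb : 0 ≤ b) (h : a + b ≤ m - 1) :
    ∃ p q l u r s, LnOK (1 - m) (m + 1) p q l u r s ∧ (∀ t, bgc m a b t = ln p q l u r s t) ∧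
      (2 * (p - q) + (l + u) + 2 * (s - r) = 0 ↔ a + b = m - 1 ∧ 1 ≤ a ∧ 1 ≤ b) := by
  by_cases h1 : a + b = m - 1 ∧ 1 ≤ a ∧ 1 ≤ b
  · exact ⟨1 - m, 1, m, m, 0, 0, by unfold LnOK; omega,
      fun t => by simp only [bgc, if_pos h1], by omega⟩
  obtain ⟨v, hv, e⟩ : ∃ v, (v ≠ 0 ∧ 1 - m ≤ v ∧ v ≤ m) ∧ ∀ t, bgc m a b t = dl v t := by
    unfold bgc
    simp only [if_neg h1]
    split_ifs
    · exact ⟨_, by omega, fun t => rfl⟩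
    · exact ⟨_, by omega, fun t => rfl⟩
    · exact ⟨_, by omega, fun t => rfl⟩
    · exact ⟨_, by omega, fun t => rfl⟩
    · exact ⟨_, by omega, fun t => rfl⟩
    · exact ⟨_, by omega, fun t => rfl⟩
    · exact ⟨_, by omega, fun t => rfl⟩
    · exact ⟨_, by omega, fun t => rfl⟩
  refine ⟨0, 0, v, v, 0, 0, by unfold LnOK; omega, ?_, by omega⟩
  intro t
  rw [e, blk_single]

theorem dmc_cell {m e f : ℤ} (hm : 7 ≤ m) (he : 1 ≤ e) (he' : e ≤ m) (hf : 0 ≤ f) (hf' : f ≤ m) :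
    ∃ p q l u r s, LnOK (1 - m) (m + 1) p q l u r s ∧ (∀ t, dmc m e f t = ln p q l u r s t) ∧
      2 * (p - q) + (l + u) + 2 * (s - r) = 0 := by
  by_cases h1 : f = 3 ∧ e ≤ 3
  · exact ⟨2 - m, 4 - m, 5 - m, m - 5, m - 4, m - 2, by unfold LnOK; omega,
      fun t => by simp only [dmc, if_pos h1], by omega⟩
  by_cases h2 : f = 2 ∧ e ≤ 2
  · exact ⟨0, 0, 4 - m, m - 4, 0, 0, by unfold LnOK; omega,
      fun t => by simp only [dmc, if_neg h1, if_pos h2, ln_blk], by omega⟩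
  have h3 : max e f ≤ m := max_le he' hf'
  have h4 : 1 ≤ max e f := le_max_of_le_left he
  exact ⟨0, 0, -(m - max e f), m - max e f, 0, 0, by unfold LnOK; omega,
      fun t => by simp only [dmc, if_neg h1, if_neg h2, ln_blk], by omega⟩

theorem GG_cell {m i j : ℤ} (hm : 7 ≤ m) (hi : 0 ≤ i) (hi' : i ≤ m - 1) (hj : 0 ≤ j)
    (hj' : j < 2 * m) :
    ∃ p q l u r s, LnOK (1 - m) (m + 1) p q l u r s ∧ (∀ t, GG m i j t = ln p q l u r s t) ∧
      (2 * (p - q) + (l + u) + 2 * (s - r) = 0 ↔ elo m i ≤ j ∧ j ≤ ehi m i) := by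
  rcases (by omega : i + j ≤ m - 2 ∨ m ≤ j - i ∨ (m - 1 - i ≤ j ∧ j ≤ m - 1 + i)) with h | h | h
  · obtain ⟨p, q, l, u, r, s, h1, h2, h3⟩ := smc_cell hm hi hj h
    refine ⟨p, q, l, u, r, s, h1, ?_, ?_⟩
    · intro t
      rw [← h2, GG, if_pos h]
    · rw [h3]
      unfold elo ehi
      split_ifs <;> omega
  · obtain ⟨p, q, l, u, r, s, h1, h2, h3⟩ := bgc_cell (b := 2 * m - 1 - j) hm hi (by omega)
      (by omega)
    refine ⟨p, q, l, u, r, s, h1, ?_, ?_⟩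
    · intro t
      rw [← h2, GG, if_neg (by omega), if_neg (by omega), if_pos h]
    · rw [h3]
      unfold elo ehi
      split_ifs <;> omega
  · obtain ⟨p, q, l, u, r, s, h1, h2, h3⟩ := dmc_cell (e := |j - i| + 1) (f := |i + j + 1 - 2 * m|)
      hm (by have := abs_nonneg (j - i); omega)
      (by have : |j - i| ≤ m - 1 := by { rw [abs_le]; omega }
          omega)
      (abs_nonneg _) (by rw [abs_le]; omega)
    refine ⟨p, q, l, u, r, s, h1, ?_, ?_⟩
    · intro t
      rw [← h2, GG, if_neg (by omega), if_neg (by omega), if_neg (by omega), if_neg (by omega)]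
    · simp only [h3, true_iff]
      unfold elo ehi
      split_ifs <;> omega

theorem even_sum (m : ℕ) (hm : 7 ≤ m) (lo hi : ℤ → ℤ)
    (h1 : ∀ i : ℤ, i ≤ m - 1 → lo i = elo m i ∧ hi i = ehi m i)
    (h2 : ∀ i : ℤ, m - 1 < i → lo i = 2 * m - 1 - ehi m (2 * m - 1 - i) ∧
      hi i = 2 * m - 1 - elo m (2 * m - 1 - i)) :
    ∑ i ∈ Finset.range (2 * m), (hi i + 1 - lo i).toNat = 2 * m ^ 2 + 4 * m - 10 := by
  obtain ⟨d, rfl⟩ : ∃ d, m = d + 3 := ⟨m - 3, by omega⟩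
  have hA : ∀ k, k ≤ d →
      ∑ i ∈ Finset.range k, (hi ((i : ℕ) + 1 : ℕ) + 1 - lo ((i : ℕ) + 1 : ℕ)).toNat
      = k ^ 2 + 4 * k := by
    intro k hk
    induction k with
    | zero => simp
    | succ k ih =>
      rw [Finset.sum_range_succ, ih (by omega)]
      obtain ⟨e1, e2⟩ := h1 ((k + 1 : ℕ) : ℤ) (by omega)
      have : (hi ((k + 1 : ℕ) : ℤ) + 1 - lo ((k + 1 : ℕ) : ℤ)).toNat = 2 * k + 5 := by
        rw [e1, e2]
        unfold elo ehi
        split_ifs <;> omega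
      rw [this]; ring
  have hhalf : ∑ i ∈ Finset.range (d + 3), (hi i + 1 - lo i).toNat =
      1 + (d ^ 2 + 4 * d) + (2 * d + 4) + (2 * d + 5) := by
    rw [Finset.sum_range_succ, Finset.sum_range_succ, Finset.sum_range_succ', hA _ le_rfl]
    obtain ⟨e1, e2⟩ := h1 ((0 : ℕ) : ℤ) (by omega)
    obtain ⟨e3, e4⟩ := h1 ((d + 1 : ℕ) : ℤ) (by omega)
    obtain ⟨e5, e6⟩ := h1 ((d + 2 : ℕ) : ℤ) (by omega)
    have a1 : (hi ((0 : ℕ) : ℤ) + 1 - lo ((0 : ℕ) : ℤ)).toNat = 1 := by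
      rw [e1, e2]
      unfold elo ehi
      split_ifs <;> omega
    have a2 : (hi ((d + 1 : ℕ) : ℤ) + 1 - lo ((d + 1 : ℕ) : ℤ)).toNat = 2 * d + 4 := by
      rw [e3, e4]
      unfold elo ehi
      split_ifs <;> omega
    have a3 : (hi ((d + 2 : ℕ) : ℤ) + 1 - lo ((d + 2 : ℕ) : ℤ)).toNat = 2 * d + 5 := by
      rw [e5, e6]
      unfold elo ehi
      split_ifs <;> omega
    rw [a1, a2, a3]
    omega
  rw [show 2 * (d + 3) = (d + 3) + (d + 3) by ring, Finset.sum_range_add,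
    hhalf, ← Finset.sum_range_reflect]
  have e : ∑ j ∈ Finset.range (d + 3), (hi ((d + 3 + (d + 3 - 1 - j) : ℕ) : ℤ) + 1 -
      lo ((d + 3 + (d + 3 - 1 - j) : ℕ) : ℤ)).toNat =
      ∑ i ∈ Finset.range (d + 3), (hi i + 1 - lo i).toNat := by
    apply Finset.sum_congr rfl
    intro j hj
    have hj := Finset.mem_range.1 hj
    obtain ⟨e1, e2⟩ := h2 ((d + 3 + (d + 3 - 1 - j) : ℕ) : ℤ) (by omega)
    obtain ⟨e3, e4⟩ := h1 (j : ℤ) (by omega)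
    rw [e1, e2, e3, e4, show 2 * ((d + 3 : ℕ) : ℤ) - 1 - ((d + 3 + (d + 3 - 1 - j) : ℕ) : ℤ) = j by
      omega]
    omega
  rw [e, hhalf]
  symm
  apply Nat.sub_eq_of_eq_add
  ring

theorem even_case (m : ℕ) (hm : 7 ≤ m) :
    ∃ A : Fin (2 * m) → Fin (2 * m) → Fin (2 * m) → ℤ, IsASHM A ∧
      (Finset.univ.filter (fun p : Fin (2 * m) × Fin (2 * m) =>
        ashl A p.1 p.2 = 1 - (1 - (m : ℤ)))).card = 2 * m ^ 2 + 4 * m - 10 := by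
  have hm' : (7 : ℤ) ≤ m := by omega
  have hn : ((2 * m : ℕ) : ℤ) = 2 * (m : ℤ) := by push_cast; ring
  have hn2 : 1 - (m : ℤ) + ((2 * m : ℕ) : ℤ) = m + 1 := by push_cast; ring
  rw [← even_sum m hm (fun i => if i ≤ m - 1 then elo m i else 2 * m - 1 - ehi m (2 * m - 1 - i))
    (fun i => if i ≤ m - 1 then ehi m i else 2 * m - 1 - elo m (2 * m - 1 - i))
    (fun i hi => by simp only [if_pos hi, and_self])
    (fun i hi => by simp only [if_neg (not_le.2 hi), and_self])]
  refine assemble (2 * m) (1 - (m : ℤ)) (GG m)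
    (fun i => if i ≤ m - 1 then elo m i else 2 * m - 1 - ehi m (2 * m - 1 - i))
    (fun i => if i ≤ m - 1 then ehi m i else 2 * m - 1 - elo m (2 * m - 1 - i)) ?_ ?_ ?_ ?_
  · intro i t h1 h2 h3 h4
    rw [hn]
    exact GG_alt hm' h1 (by omega) h3 (by omega)
  · intro i j t h1 h2 h3 h4
    exact GG_comm hm' i j t h1 (by omega) h3 (by omega)
  · intro i j h1 h2 h3 h4
    rw [hn2]
    rcases le_or_gt i (m - 1) with h | h
    · simp only [if_pos h]
      obtain ⟨p, q, l, u, r, s, g1, g2, g3⟩ := GG_cell hm' h1 h h3 (by omega)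
      exact ⟨p, q, l, u, r, s, g1, fun t _ _ => g2 t, g3⟩
    · simp only [if_neg (not_le.2 h)]
      obtain ⟨p, q, l, u, r, s, g1, g2, g3⟩ := GG_cell (i := 2 * m - 1 - i) (j := 2 * m - 1 - j) hm'
        (by omega) (by omega) (by omega) (by omega)
      refine ⟨p, q, l, u, r, s, g1, fun t _ _ => ?_, ?_⟩
      · rw [← g2, GG_rot hm' i j t h1 (by omega) h3 (by omega)]
      · rw [g3]
        constructor <;> intro h <;> omega
  · intro i h1 h2
    rcases le_or_gt i (m - 1) with h | h
    · simp only [if_pos h]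
      unfold elo ehi
      split_ifs <;> omega
    · simp only [if_neg (not_le.2 h)]
      unfold elo ehi
      split_ifs <;> omega

/-! ### Small even cases, and the theorem -/

def tab8 : List (List ℕ) := [
  [1, 9, 729, 27, 2187, 81, 243, 3],
  [9, 262, 27, 144, 27, 894, 2754, 243],
  [729, 27, 144, 453, 144, 3679, 894, 81],
  [27, 144, 453, 1366, 453, 144, 27, 2187],
  [2187, 27, 144, 453, 1366, 453, 144, 27],
  [81, 894, 3679, 144, 453, 144, 27, 729],
  [243, 2754, 894, 27, 144, 27, 262, 9],
  [3, 243, 81, 2187, 27, 729, 9, 1]]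

def tab10 : List (List ℕ) := [
  [3, 9, 27, 6561, 81, 19683, 243, 2187, 729, 1],
  [9, 27, 2242, 81, 432, 81, 7050, 24300, 2187, 729],
  [27, 2242, 81, 432, 1359, 432, 81, 7050, 24300, 2187],
  [6561, 81, 432, 1359, 4098, 1359, 33244, 81, 7050, 243],
  [81, 432, 1359, 4098, 12301, 4098, 1359, 432, 81, 19683],
  [19683, 81, 432, 1359, 4098, 12301, 4098, 1359, 432, 81],
  [243, 7050, 81, 33244, 1359, 4098, 1359, 432, 81, 6561],
  [2187, 24300, 7050, 81, 432, 1359, 432, 81, 2242, 27],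
  [729, 2187, 24300, 7050, 81, 432, 81, 2242, 27, 9],
  [1, 729, 2187, 243, 19683, 81, 6561, 27, 9, 3]]

def tab12 : List (List ℕ) := [
  [1, 27, 19683, 81, 59049, 243, 177147, 729, 2187, 9, 3, 6561],
  [27, 177210, 81, 19846, 243, 1296, 243, 8046, 59049, 2187, 729, 3],
  [19683, 81, 105139, 243, 1296, 4077, 1296, 243, 181524, 19683, 2187, 9],
  [81, 19846, 243, 1296, 4077, 12294, 4077, 1296, 243, 181524, 59049, 2187],
  [59049, 243, 1296, 4077, 12294, 36903, 12294, 194320, 1296, 243, 8046, 729],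
  [243, 1296, 4077, 12294, 36903, 110716, 36903, 12294, 4077, 1296, 243, 177147],
  [177147, 243, 1296, 4077, 12294, 36903, 110716, 36903, 12294, 4077, 1296, 243],
  [729, 8046, 243, 1296, 194320, 12294, 36903, 12294, 4077, 1296, 243, 59049],
  [2187, 59049, 181524, 243, 1296, 4077, 12294, 4077, 1296, 243, 19846, 81],
  [9, 2187, 19683, 181524, 243, 1296, 4077, 1296, 243, 105139, 81, 19683],
  [3, 729, 2187, 59049, 8046, 243, 1296, 243, 19846, 81, 177210, 27],
  [6561, 3, 9, 2187, 729, 177147, 243, 59049, 81, 19683, 27, 1]]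


def tabA (T : List (List ℕ)) (n : ℕ) (i j k : Fin n) : ℤ :=
  if ((T.getD i []).getD j 0 / 3 ^ (k : ℕ)) % 3 = 2 then -1
  else (((T.getD i []).getD j 0 / 3 ^ (k : ℕ)) % 3 : ℕ)

theorem isASHM_of_good {n : ℕ} (A : Fin n → Fin n → Fin n → ℤ)
    (h : ∀ a b, good 0 ((List.finRange n).map (fun i => A i a b)) = true ∧
      good 0 ((List.finRange n).map (fun j => A a j b)) = true ∧
      good 0 ((List.finRange n).map (fun k => A a b k)) = true) : IsASHM A :=
  ⟨fun j k => altLine_of_good _ (h j k).1, fun i k => altLine_of_good _ (h i k).2.1,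
    fun i j => altLine_of_good _ (h i j).2.2⟩

theorem case8 : IsASHM (tabA tab8 8) ∧ (Finset.univ.filter (fun p : Fin 8 × Fin 8 =>
    ashl (tabA tab8 8) p.1 p.2 = ((8 / 2 : ℕ) : ℤ))).card = (8 ^ 2 + 4 * 8 - 20) / 2 :=
  ⟨isASHM_of_good _ (by decide +kernel), by decide +kernel⟩

theorem case10 : IsASHM (tabA tab10 10) ∧ (Finset.univ.filter (fun p : Fin 10 × Fin 10 =>
    ashl (tabA tab10 10) p.1 p.2 = ((10 / 2 : ℕ) : ℤ))).card = (10 ^ 2 + 4 * 10 - 20) / 2 :=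
  ⟨isASHM_of_good _ (by decide +kernel), by decide +kernel⟩

theorem case12 : IsASHM (tabA tab12 12) ∧ (Finset.univ.filter (fun p : Fin 12 × Fin 12 =>
    ashl (tabA tab12 12) p.1 p.2 = ((12 / 2 : ℕ) : ℤ))).card = (12 ^ 2 + 4 * 12 - 20) / 2 :=
  ⟨isASHM_of_good _ (by decide +kernel), by decide +kernel⟩

theorem even_all (n : ℕ) (hn : Even n) (h8 : 8 ≤ n) :
    ∃ A : Fin n → Fin n → Fin n → ℤ, IsASHM A ∧
      (Finset.univ.filter (fun p : Fin n × Fin n =>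
        ashl A p.1 p.2 = ((n / 2 : ℕ) : ℤ))).card = (n ^ 2 + 4 * n - 20) / 2 := by
  obtain ⟨m, hm⟩ := hn
  obtain rfl : n = 2 * m := by omega
  rcases (by omega : m = 4 ∨ m = 5 ∨ m = 6 ∨ 7 ≤ m) with rfl | rfl | rfl | h
  · exact ⟨_, case8⟩
  · exact ⟨_, case10⟩
  · exact ⟨_, case12⟩
  · obtain ⟨A, hA, hc⟩ := even_case m h
    refine ⟨A, hA, ?_⟩
    have e1 : ((2 * m / 2 : ℕ) : ℤ) = 1 - (1 - (m : ℤ)) := by omega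
    have e2 : (2 * m) ^ 2 = 4 * m ^ 2 := by ring
    rw [e1, hc, e2]
    omega

theorem ashl_repeated_value_even_and_general :
    (∀ n : ℕ, Even n → 8 ≤ n →
      ∃ A : Fin n → Fin n → Fin n → ℤ, IsASHM A ∧
        (Finset.univ.filter
          (fun p : Fin n × Fin n =>
            ashl A p.1 p.2 = ((n / 2 : ℕ) : ℤ))).card =
          (n ^ 2 + 4 * n - 20) / 2) ∧
    (∀ n : ℕ, 7 ≤ n →
      ∃ (A : Fin n → Fin n → Fin n → ℤ) (v : ℤ), IsASHM A ∧
        (Finset.univ.filter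
          (fun p : Fin n × Fin n => ashl A p.1 p.2 = v)).card =
          (n ^ 2 + 4 * n - 19) / 2 ∧
        2 * n < (n ^ 2 + 4 * n - 19) / 2) := by
  refine ⟨even_all, ?_⟩
  intro n hn
  have hsq : 7 * n ≤ n ^ 2 := by nlinarith
  rcases Nat.even_or_odd n with he | ⟨c, rfl⟩
  · have h8 : 8 ≤ n := by
      obtain ⟨m, hm⟩ := he
      omega
    obtain ⟨A, hA, hc⟩ := even_all n he h8
    refine ⟨A, ((n / 2 : ℕ) : ℤ), hA, ?_, by omega⟩
    rw [hc]
    obtain ⟨m, rfl⟩ := he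
    have e2 : (m + m) ^ 2 = 4 * m ^ 2 := by ring
    rw [e2]
    omega
  · obtain ⟨A, hA, hc⟩ := odd_case c (by omega)
    refine ⟨A, 1 - -(c : ℤ), hA, ?_, by omega⟩
    rw [hc]
    have e2 : (2 * c + 1) ^ 2 = 4 * c ^ 2 + 4 * c + 1 := by ring
    rw [e2]
    omega
end
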